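/- arXiv:1809.02104 — 2 statements merged into one kernel-verified Lean document; each statement's English description precedes it below -/
import Mathlib

section
/- (Gaussian isoperimetric inequality) For any measurable set A ⊂ ℝⁿ with Gaussian measure μ[A] = Φ(a), the Euclidean ε-expansion A(ε) = {x : d₂(x,A) ≤ ε} satisfies μ[A(ε)] ≥ Φ(a + ε). -/
open Real MeasureTheory ProbabilityTheory

/-- The standard normal CDF. -/
noncomputable def stdNormalCDF (z : ℝ) : ℝ :=
  (Real.sqrt (2 * Real.pi))⁻¹ * ∫ t in Set.Iic z, Real.exp (-t ^ 2 / 2)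

/-!
Bobkov's proof. Let `φ` be the standard normal density and `I = φ ∘ Φ⁻¹` the Gaussian profile. For
`p` and `r` in `(0, 1)` a calculus argument gives the two-point inequality
`I ((p + r) / 2) ≤ (√(I p ^ 2 + ((p - r) / 2) ^ 2) + √(I r ^ 2 + ((p - r) / 2) ^ 2)) / 2`,
which tensorizes to the discrete cube by induction and Minkowski's inequality. By the central limit
theorem it passes to the Gaussian measure `γ` as Bobkov's functional inequality
`I (∫ f ∂γ) ≤ ∫ √(I (f x) ^ 2 + ‖∇f x‖ ^ 2) ∂γ`.

Let `D` be a smooth 1-Lipschitz approximation of the distance to `A` and let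
`F s = ∫ Φ ((s - D x) / τ) ∂γ`. Both `I` and the gradient of the integrand are multiples of
`φ ((s - D x) / τ)`, and Bobkov's inequality becomes `I (F s) ≤ √(1 + τ ^ 2) * F' s`. Since
`(Φ⁻¹)' = 1 / I`, the function `Φ⁻¹ ∘ F` grows at rate at least `1 / √(1 + τ ^ 2)`. As `τ → 0` and
`D` tends to the distance, `F s` tends to the measure of the `s`-expansion of `A`.
-/

open Filter Topology Set
open scoped NNReal Convolution

local notation "φ" => gaussianPDFReal 0 1
local notation "Φ" => stdNormalCDF

section Density

lemma gaussianPDFReal_zero_neg (v : ℝ≥0) (x : ℝ) :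
    gaussianPDFReal 0 v (-x) = gaussianPDFReal 0 v x := by
  simp [gaussianPDFReal]

lemma gaussianPDFReal_le (m : ℝ) (v : ℝ≥0) (x : ℝ) :
    gaussianPDFReal m v x ≤ (√(2 * π * v))⁻¹ := by
  refine mul_le_of_le_one_right (by positivity) (Real.exp_le_one_iff.2 ?_)
  exact div_nonpos_of_nonpos_of_nonneg (neg_nonpos.2 (sq_nonneg _)) (by positivity)

lemma hasDerivAt_gaussianPDFReal (m : ℝ) (v : ℝ≥0) (x : ℝ) :
    HasDerivAt (gaussianPDFReal m v) (-((x - m) / v) * gaussianPDFReal m v x) x := by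
  have exponent : HasDerivAt (fun x ↦ -(x - m) ^ 2 / (2 * v)) (-((x - m) / v)) x := by
    refine ((((hasDerivAt_id x).sub_const m).pow 2).neg.div_const (2 * (v : ℝ))).congr_deriv ?_
    simp only [id, Nat.cast_ofNat]
    ring
  refine (exponent.exp.const_mul (√(2 * π * v))⁻¹).congr_deriv ?_
  rw [gaussianPDFReal]
  ring

lemma stdNormalPDF_pos (t : ℝ) : 0 < φ t := gaussianPDFReal_pos 0 1 t one_ne_zero

lemma hasDerivAt_stdNormalPDF (t : ℝ) : HasDerivAt φ (-t * φ t) t := by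
  simpa using hasDerivAt_gaussianPDFReal 0 1 t

lemma continuous_stdNormalPDF : Continuous φ :=
  continuous_iff_continuousAt.2 fun t ↦ (hasDerivAt_stdNormalPDF t).continuousAt

lemma inv_sqrt_two_pi_le_one : (√(2 * π))⁻¹ ≤ 1 :=
  inv_le_one_of_one_le₀ (Real.one_le_sqrt.2 (by linarith [Real.pi_gt_three]))

lemma stdNormalPDF_le_one (t : ℝ) : φ t ≤ 1 :=
  (gaussianPDFReal_le 0 1 t).trans (by simpa using inv_sqrt_two_pi_le_one)

lemma abs_mul_exp_neg_sq_div_two_le_one (t : ℝ) : |t| * Real.exp (-t ^ 2 / 2) ≤ 1 := by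
  rw [neg_div, Real.exp_neg, mul_inv_le_iff₀ (Real.exp_pos _), one_mul]
  calc |t| ≤ t ^ 2 / 2 + 1 := by nlinarith [sq_nonneg (|t| - 1), sq_abs t]
    _ ≤ Real.exp (t ^ 2 / 2) := Real.add_one_le_exp _

lemma lipschitzWith_stdNormalPDF : LipschitzWith 1 φ := by
  refine lipschitzWith_of_nnnorm_deriv_le
    (fun t ↦ (hasDerivAt_stdNormalPDF t).differentiableAt) fun t ↦ NNReal.coe_le_coe.1 ?_
  rw [(hasDerivAt_stdNormalPDF t).deriv, coe_nnnorm, norm_mul, norm_neg, Real.norm_eq_abs,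
    Real.norm_of_nonneg (stdNormalPDF_pos t).le]
  calc |t| * φ t = (√(2 * π))⁻¹ * (|t| * Real.exp (-t ^ 2 / 2)) := by
        simp only [gaussianPDFReal, sub_zero, NNReal.coe_one, mul_one]; ring
    _ ≤ 1 := mul_le_one₀ inv_sqrt_two_pi_le_one (by positivity)
        (abs_mul_exp_neg_sq_div_two_le_one t)

lemma monotone_div_stdNormalPDF : Monotone fun t ↦ t / φ t := by
  refine monotone_of_hasDerivAt_nonneg (f' := fun t ↦ (1 + t ^ 2) / φ t) (fun t ↦ ?_) fun t ↦ ?_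
  · have := (stdNormalPDF_pos t).ne'
    refine ((hasDerivAt_id t).div (hasDerivAt_stdNormalPDF t) this).congr_deriv ?_
    simp only [id]
    field_simp
    ring
  · exact div_nonneg (by positivity) (stdNormalPDF_pos t).le

end Density

section CDF

lemma stdNormalCDF_eq_setIntegral (z : ℝ) : Φ z = ∫ t in Iic z, φ t := by
  simp only [stdNormalCDF, gaussianPDFReal, NNReal.coe_one, mul_one, sub_zero, integral_const_mul]

lemma stdNormalCDF_eq_cdf : Φ = cdf (gaussianReal 0 1) := by
  ext z
  rw [cdf_eq_real, Measure.real, gaussianReal_apply_eq_integral 0 one_ne_zero,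
    ENNReal.toReal_ofReal (integral_nonneg (gaussianPDFReal_nonneg 0 1)),
    stdNormalCDF_eq_setIntegral]

lemma hasDerivAt_stdNormalCDF (x : ℝ) : HasDerivAt Φ (φ x) x := by
  have hφ : Integrable φ := integrable_gaussianPDFReal 0 1
  have primitive : Φ = fun z ↦ Φ 0 + ∫ t in (0 : ℝ)..z, φ t := by
    ext z
    rw [stdNormalCDF_eq_setIntegral, stdNormalCDF_eq_setIntegral,
      ← intervalIntegral.integral_Iic_sub_Iic hφ.integrableOn hφ.integrableOn]
    ring
  rw [primitive]
  exact (continuous_stdNormalPDF.integral_hasStrictDerivAt 0 x).hasDerivAt.const_add _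

@[fun_prop]
lemma continuous_stdNormalCDF : Continuous Φ :=
  continuous_iff_continuousAt.2 fun x ↦ (hasDerivAt_stdNormalCDF x).continuousAt

lemma strictMono_stdNormalCDF : StrictMono Φ :=
  strictMono_of_hasDerivAt_pos hasDerivAt_stdNormalCDF stdNormalPDF_pos

lemma tendsto_stdNormalCDF_atTop : Tendsto Φ atTop (𝓝 1) :=
  stdNormalCDF_eq_cdf ▸ tendsto_cdf_atTop _

lemma tendsto_stdNormalCDF_atBot : Tendsto Φ atBot (𝓝 0) :=
  stdNormalCDF_eq_cdf ▸ tendsto_cdf_atBot _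

lemma stdNormalCDF_mem_Ioo (x : ℝ) : Φ x ∈ Ioo 0 1 :=
  ⟨(strictMono_stdNormalCDF.monotone.le_of_tendsto tendsto_stdNormalCDF_atBot _).trans_lt
      (strictMono_stdNormalCDF (sub_one_lt x)),
    (strictMono_stdNormalCDF (lt_add_one x)).trans_le
      (strictMono_stdNormalCDF.monotone.ge_of_tendsto tendsto_stdNormalCDF_atTop _)⟩

lemma stdNormalCDF_neg (x : ℝ) : Φ (-x) = 1 - Φ x := by
  have hφ : Integrable φ := integrable_gaussianPDFReal 0 1
  have tail : Φ (-x) = ∫ t in Ioi x, φ t := by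
    rw [stdNormalCDF_eq_setIntegral, ← integral_comp_neg_Ioi]
    simp only [gaussianPDFReal_zero_neg]
  rw [tail, eq_sub_iff_add_eq', stdNormalCDF_eq_setIntegral,
    intervalIntegral.integral_Iic_add_Ioi hφ.integrableOn hφ.integrableOn,
    integral_gaussianPDFReal_eq_one 0 one_ne_zero]

lemma mem_range_stdNormalCDF {p : ℝ} (hp : p ∈ Ioo 0 1) : p ∈ range Φ :=
  mem_range_of_exists_le_of_exists_ge continuous_stdNormalCDF
    ((tendsto_stdNormalCDF_atBot.eventually (gt_mem_nhds hp.1)).exists.imp fun _ h ↦ h.le)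
    ((tendsto_stdNormalCDF_atTop.eventually (lt_mem_nhds hp.2)).exists.imp fun _ h ↦ h.le)

end CDF

section Profile

/-- The standard normal quantile function `Φ⁻¹`; its values outside `(0, 1)` are junk. -/
noncomputable def stdNormalQuantile : ℝ → ℝ := Function.invFun stdNormalCDF

/-- The Gaussian isoperimetric profile `φ ∘ Φ⁻¹`: at `p` it is the Gaussian surface area of a
half-space of Gaussian measure `p`. -/
noncomputable def gaussianProfile (p : ℝ) : ℝ := gaussianPDFReal 0 1 (stdNormalQuantile p)

lemma stdNormalQuantile_stdNormalCDF (x : ℝ) : stdNormalQuantile (Φ x) = x :=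
  Function.leftInverse_invFun strictMono_stdNormalCDF.injective x

lemma gaussianProfile_stdNormalCDF (x : ℝ) : gaussianProfile (Φ x) = φ x := by
  rw [gaussianProfile, stdNormalQuantile_stdNormalCDF]

lemma gaussianProfile_pos (p : ℝ) : 0 < gaussianProfile p := stdNormalPDF_pos _

lemma gaussianProfile_le_one (p : ℝ) : gaussianProfile p ≤ 1 := stdNormalPDF_le_one _

variable {p : ℝ}

lemma stdNormalCDF_stdNormalQuantile (hp : p ∈ Ioo 0 1) : Φ (stdNormalQuantile p) = p :=
  Function.invFun_eq (mem_range_stdNormalCDF hp)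

lemma monotoneOn_stdNormalQuantile : MonotoneOn stdNormalQuantile (Ioo 0 1) := by
  intro p hp r hr hpr
  rwa [← strictMono_stdNormalCDF.le_iff_le, stdNormalCDF_stdNormalQuantile hp,
    stdNormalCDF_stdNormalQuantile hr]

lemma stdNormalQuantile_one_sub (hp : p ∈ Ioo 0 1) :
    stdNormalQuantile (1 - p) = -stdNormalQuantile p := by
  obtain ⟨x, rfl⟩ := mem_range_stdNormalCDF hp
  rw [← stdNormalCDF_neg, stdNormalQuantile_stdNormalCDF, stdNormalQuantile_stdNormalCDF]

lemma gaussianProfile_one_sub (hp : p ∈ Ioo 0 1) :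
    gaussianProfile (1 - p) = gaussianProfile p := by
  rw [gaussianProfile, stdNormalQuantile_one_sub hp, gaussianPDFReal_zero_neg, gaussianProfile]

lemma hasDerivAt_stdNormalQuantile (hp : p ∈ Ioo 0 1) :
    HasDerivAt stdNormalQuantile (gaussianProfile p)⁻¹ p := by
  obtain ⟨x, rfl⟩ := mem_range_stdNormalCDF hp
  have strict : HasStrictDerivAt Φ (φ x) x :=
    hasStrictDerivAt_of_hasDerivAt_of_continuousAt (.of_forall hasDerivAt_stdNormalCDF)
      continuous_stdNormalPDF.continuousAt
  rw [gaussianProfile_stdNormalCDF]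
  exact (strict.to_local_left_inverse (stdNormalPDF_pos x).ne'
    (.of_forall stdNormalQuantile_stdNormalCDF)).hasDerivAt

lemma hasDerivAt_gaussianProfile (hp : p ∈ Ioo 0 1) :
    HasDerivAt gaussianProfile (-stdNormalQuantile p) p := by
  refine ((hasDerivAt_stdNormalPDF _).comp p (hasDerivAt_stdNormalQuantile hp)).congr_deriv ?_
  exact mul_inv_cancel_right₀ (gaussianProfile_pos p).ne' _

lemma hasDerivAt_gaussianProfile_sq (hp : p ∈ Ioo 0 1) :
    HasDerivAt (fun p ↦ gaussianProfile p ^ 2)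
      (-2 * (gaussianProfile p * stdNormalQuantile p)) p := by
  refine ((hasDerivAt_gaussianProfile hp).pow 2).congr_deriv ?_
  simp only [Nat.cast_ofNat, Nat.add_one_sub_one, pow_one]
  ring

lemma hasDerivAt_neg_two_mul_gaussianProfile_mul_stdNormalQuantile (hp : p ∈ Ioo 0 1) :
    HasDerivAt (fun p ↦ -2 * (gaussianProfile p * stdNormalQuantile p))
      (2 * stdNormalQuantile p ^ 2 - 2) p := by
  refine (((hasDerivAt_gaussianProfile hp).mul
    (hasDerivAt_stdNormalQuantile hp)).const_mul (-2)).congr_deriv ?_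
  have := (gaussianProfile_pos p).ne'
  field_simp
  ring

lemma convexOn_stdNormalQuantile_sq : ConvexOn ℝ (Ioo 0 1) fun p ↦ stdNormalQuantile p ^ 2 := by
  have deriv_sq (p : ℝ) (hp : p ∈ Ioo 0 1) : HasDerivAt (fun p ↦ stdNormalQuantile p ^ 2)
      (2 * (stdNormalQuantile p / φ (stdNormalQuantile p))) p := by
    refine ((hasDerivAt_stdNormalQuantile hp).pow 2).congr_deriv ?_
    simp only [Nat.cast_ofNat, Nat.add_one_sub_one, pow_one, gaussianProfile]
    ring
  refine MonotoneOn.convexOn_of_deriv (convex_Ioo 0 1)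
    (fun p hp ↦ (deriv_sq p hp).continuousAt.continuousWithinAt) ?_ ?_ <;> rw [interior_Ioo]
  · exact fun p hp ↦ (deriv_sq p hp).differentiableAt.differentiableWithinAt
  · intro p hp r hr hpr
    rw [(deriv_sq p hp).deriv, (deriv_sq r hr).deriv]
    have := monotone_div_stdNormalPDF (monotoneOn_stdNormalQuantile hp hr hpr)
    simp only at this
    linarith

end Profile

section SymmetricDifferences

lemma nonneg_of_hasDerivAt_nonneg {f f' : ℝ → ℝ} {r : ℝ} (h0 : 0 ≤ f 0)
    (hf : ∀ x ∈ Ico 0 r, HasDerivAt f (f' x) x) (hf' : ∀ x ∈ Ico 0 r, 0 ≤ f' x) {x : ℝ}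
    (hx : x ∈ Ico 0 r) : 0 ≤ f x := by
  have mono : MonotoneOn f (Ico 0 r) := by
    refine monotoneOn_of_hasDerivWithinAt_nonneg (convex_Ico 0 r)
      (fun y hy ↦ (hf y hy).continuousAt.continuousWithinAt)
      (fun y hy ↦ (hf y (interior_subset hy)).hasDerivWithinAt)
      fun y hy ↦ hf' y (interior_subset hy)
  exact h0.trans (mono ⟨le_rfl, hx.1.trans_lt hx.2⟩ hx hx.1)

variable {g g' g'' : ℝ → ℝ} {c r x : ℝ}

lemma add_mem_Ioo_and_sub_mem_Ioo (hx : x ∈ Ico 0 r) :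
    c + x ∈ Ioo (c - r) (c + r) ∧ c - x ∈ Ioo (c - r) (c + r) := by
  obtain ⟨h0, hr⟩ := hx
  refine ⟨⟨?_, ?_⟩, ?_, ?_⟩ <;> linarith

lemma mul_sq_le_add_sub_two_mul_of_convexOn
    (hg : ∀ p ∈ Ioo (c - r) (c + r), HasDerivAt g (g' p) p)
    (hg' : ∀ p ∈ Ioo (c - r) (c + r), HasDerivAt g' (g'' p) p)
    (hg'' : ConvexOn ℝ (Ioo (c - r) (c + r)) g'') (hx : x ∈ Ico 0 r) :
    g'' c * x ^ 2 ≤ g (c + x) + g (c - x) - 2 * g c := by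
  have midpoint (y : ℝ) (hy : y ∈ Ico 0 r) : 0 ≤ g'' (c + y) + g'' (c - y) - 2 * g'' c := by
    obtain ⟨hadd, hsub⟩ := add_mem_Ioo_and_sub_mem_Ioo (c := c) hy
    have := hg''.2 hadd hsub (by norm_num : (0 : ℝ) ≤ 1 / 2) (by norm_num : (0 : ℝ) ≤ 1 / 2)
      (by norm_num)
    simp only [smul_eq_mul, show 1 / 2 * (c + y) + 1 / 2 * (c - y) = c by ring] at this
    linarith
  have first_order (y : ℝ) (hy : y ∈ Ico 0 r) :
      0 ≤ g' (c + y) - g' (c - y) - 2 * g'' c * y := by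
    refine nonneg_of_hasDerivAt_nonneg (f := fun y ↦ g' (c + y) - g' (c - y) - 2 * g'' c * y)
      (by simp) (fun y hy ↦ ?_) midpoint hy
    obtain ⟨hadd, hsub⟩ := add_mem_Ioo_and_sub_mem_Ioo (c := c) hy
    refine ((((hg' _ hadd).comp_const_add c y).sub ((hg' _ hsub).comp_const_sub c y)).sub
      ((hasDerivAt_id y).const_mul (2 * g'' c))).congr_deriv ?_
    ring
  have second_order := nonneg_of_hasDerivAt_nonneg
    (f := fun y ↦ g (c + y) + g (c - y) - 2 * g c - g'' c * y ^ 2)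
    (by simp only [add_zero, sub_zero]; linarith) (fun y hy ↦ ?_) first_order hx
  · linarith
  · obtain ⟨hadd, hsub⟩ := add_mem_Ioo_and_sub_mem_Ioo (c := c) hy
    refine (((((hg _ hadd).comp_const_add c y).add ((hg _ hsub).comp_const_sub c y)).sub_const
      (2 * g c)).sub ((hasDerivAt_pow 2 y).const_mul (g'' c))).congr_deriv ?_
    simp only [Nat.cast_ofNat, Nat.add_one_sub_one, pow_one]
    ring

lemma sub_le_two_mul_deriv_mul
    (hg : ∀ p ∈ Ioo (c - r) (c + r), HasDerivAt g (g' p) p)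
    (hg' : ∀ p ∈ Ioo (c - r) (c + r), HasDerivAt g' (g'' p) p)
    (hg'' : ∀ y ∈ Ico 0 r, g'' (c + y) ≤ g'' (c - y)) (hx : x ∈ Ico 0 r) :
    g (c + x) - g (c - x) ≤ 2 * g' c * x := by
  have first_order (y : ℝ) (hy : y ∈ Ico 0 r) : 0 ≤ 2 * g' c - g' (c + y) - g' (c - y) := by
    refine nonneg_of_hasDerivAt_nonneg (f := fun y ↦ 2 * g' c - g' (c + y) - g' (c - y))
      (by simp only [add_zero, sub_zero]; linarith) (fun y hy ↦ ?_)
      (fun y hy ↦ sub_nonneg.2 (hg'' y hy)) hy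
    obtain ⟨hadd, hsub⟩ := add_mem_Ioo_and_sub_mem_Ioo (c := c) hy
    refine ((((hg' _ hadd).comp_const_add c y).const_sub (2 * g' c)).sub
      ((hg' _ hsub).comp_const_sub c y)).congr_deriv ?_
    ring
  have zeroth_order := nonneg_of_hasDerivAt_nonneg
    (f := fun y ↦ 2 * g' c * y - g (c + y) + g (c - y)) (by simp) (fun y hy ↦ ?_) first_order hx
  · linarith
  · obtain ⟨hadd, hsub⟩ := add_mem_Ioo_and_sub_mem_Ioo (c := c) hy
    refine ((((hasDerivAt_id y).const_mul (2 * g' c)).sub ((hg _ hadd).comp_const_add c y)).add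
      ((hg _ hsub).comp_const_sub c y)).congr_deriv ?_
    ring

end SymmetricDifferences

section TwoPoint

lemma two_mul_le_add_of_sq_sub_sq_sq_le {m X Y : ℝ} (hm : 0 < m) (hX : 0 ≤ X) (hY : 0 ≤ Y)
    (h : (X ^ 2 - Y ^ 2) ^ 2 ≤ 8 * m ^ 2 * (X ^ 2 + Y ^ 2 - 2 * m ^ 2)) : 2 * m ≤ X + Y := by
  by_contra! hlt
  have sum_sq_lt : 0 < 4 * m ^ 2 - (X + Y) ^ 2 := by nlinarith
  have diff_sq_lt : 0 < 4 * m ^ 2 - (X - Y) ^ 2 := by nlinarith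
  have factored : (4 * m ^ 2 - (X + Y) ^ 2) * (4 * m ^ 2 - (X - Y) ^ 2) =
      (X ^ 2 - Y ^ 2) ^ 2 - 8 * m ^ 2 * (X ^ 2 + Y ^ 2 - 2 * m ^ 2) := by ring
  have product_pos := mul_pos sum_sq_lt diff_sq_lt
  rw [factored] at product_pos
  linarith

variable {c x : ℝ}

lemma Ioo_sub_self_add_self_subset (hc : c ≤ 1 / 2) : Ioo (c - c) (c + c) ⊆ Ioo 0 1 :=
  Ioo_subset_Ioo (sub_self c).ge (by linarith)

lemma stdNormalQuantile_add_sq_le_sub_sq (hc : c ≤ 1 / 2) (hx : x ∈ Ico 0 c) :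
    stdNormalQuantile (c + x) ^ 2 ≤ stdNormalQuantile (c - x) ^ 2 := by
  obtain ⟨hadd, hsub⟩ := add_mem_Ioo_and_sub_mem_Ioo (c := c) hx
  replace hadd := Ioo_sub_self_add_self_subset hc hadd
  replace hsub := Ioo_sub_self_add_self_subset hc hsub
  have lower := monotoneOn_stdNormalQuantile hsub hadd (by linarith [hx.1])
  have upper := monotoneOn_stdNormalQuantile hadd
    (⟨by linarith [hsub.2], by linarith [hsub.1]⟩ : 1 - (c - x) ∈ Ioo 0 1) (by linarith)
  rw [stdNormalQuantile_one_sub hsub] at upper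
  nlinarith

lemma gaussianProfile_sub_le_add (hc : c ≤ 1 / 2) (hx : x ∈ Ico 0 c) :
    gaussianProfile (c - x) ≤ gaussianProfile (c + x) := by
  have := stdNormalQuantile_add_sq_le_sub_sq hc hx
  simp only [gaussianProfile, gaussianPDFReal, sub_zero]
  gcongr

-- The square of the profile has second derivative `2 (Φ⁻¹) ^ 2 - 2`, which is convex and at most as
-- large at `c + y` as at `c - y`. The former bounds the second symmetric difference of the square
-- from below, the latter bounds its first symmetric difference from above.
lemma two_mul_gaussianProfile_le (hc : c ≤ 1 / 2) (hx : x ∈ Ico 0 c) :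
    2 * gaussianProfile c ≤
      √(gaussianProfile (c + x) ^ 2 + x ^ 2) + √(gaussianProfile (c - x) ^ 2 + x ^ 2) := by
  have hsub := Ioo_sub_self_add_self_subset hc
  have convex : ConvexOn ℝ (Ioo (c - c) (c + c)) fun p ↦ 2 * stdNormalQuantile p ^ 2 - 2 :=
    (ConvexOn.smul zero_le_two
      (convexOn_stdNormalQuantile_sq.subset hsub (convex_Ioo _ _))).add_const (-2)
  have second_difference := mul_sq_le_add_sub_two_mul_of_convexOn
    (fun p hp ↦ hasDerivAt_gaussianProfile_sq (hsub hp))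
    (fun p hp ↦ hasDerivAt_neg_two_mul_gaussianProfile_mul_stdNormalQuantile (hsub hp))
    convex hx
  have first_difference := sub_le_two_mul_deriv_mul
    (fun p hp ↦ hasDerivAt_gaussianProfile_sq (hsub hp))
    (fun p hp ↦ hasDerivAt_neg_two_mul_gaussianProfile_mul_stdNormalQuantile (hsub hp))
    (fun y hy ↦ by linarith [stdNormalQuantile_add_sq_le_sub_sq hc hy]) hx
  have first_difference_nonneg :
      0 ≤ gaussianProfile (c + x) ^ 2 - gaussianProfile (c - x) ^ 2 :=
    sub_nonneg.2 (pow_le_pow_left₀ (gaussianProfile_pos _).le (gaussianProfile_sub_le_add hc hx) 2)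
  apply two_mul_le_add_of_sq_sub_sq_sq_le (gaussianProfile_pos c) (Real.sqrt_nonneg _)
    (Real.sqrt_nonneg _)
  rw [Real.sq_sqrt (by positivity), Real.sq_sqrt (by positivity), add_sub_add_right_eq_sub]
  calc (gaussianProfile (c + x) ^ 2 - gaussianProfile (c - x) ^ 2) ^ 2
      ≤ (2 * (-2 * (gaussianProfile c * stdNormalQuantile c)) * x) ^ 2 :=
        pow_le_pow_left₀ first_difference_nonneg first_difference 2
    _ = 8 * gaussianProfile c ^ 2 * (2 * stdNormalQuantile c ^ 2 * x ^ 2) := by ring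
    _ ≤ _ := by
        gcongr
        linarith

-- Both sides are symmetric in `(p, r)` and, by `gaussianProfile_one_sub`, under `p ↦ 1 - p`.
theorem gaussianProfile_midpoint_le {p r : ℝ} (hp : p ∈ Ioo 0 1) (hr : r ∈ Ioo 0 1) :
    gaussianProfile ((p + r) / 2) ≤
      (√(gaussianProfile p ^ 2 + ((p - r) / 2) ^ 2) +
        √(gaussianProfile r ^ 2 + ((p - r) / 2) ^ 2)) / 2 := by
  wlog hrp : r ≤ p generalizing p r
  · have swapped := this hr hp (not_le.1 hrp).le
    rwa [add_comm r p, ← neg_sub p r, neg_div, neg_sq, add_comm (√_) (√_)] at swapped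
  wlog hc : (p + r) / 2 ≤ 1 / 2 generalizing p r
  · have reflected := this (p := 1 - r) (r := 1 - p) ⟨by linarith [hr.2], by linarith [hr.1]⟩
      ⟨by linarith [hp.2], by linarith [hp.1]⟩ (by linarith) (by linarith)
    have hmid : (p + r) / 2 ∈ Ioo 0 1 := ⟨by linarith [hp.1, hr.1], by linarith [hp.2, hr.2]⟩
    rwa [show (1 - r + (1 - p)) / 2 = 1 - (p + r) / 2 by ring,
      show (1 - r - (1 - p)) / 2 = (p - r) / 2 by ring, gaussianProfile_one_sub hmid,
      gaussianProfile_one_sub hp, gaussianProfile_one_sub hr, add_comm (√_) (√_)] at reflected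
  have centred := two_mul_gaussianProfile_le hc (x := (p - r) / 2)
    ⟨by linarith, by linarith [hr.1]⟩
  rw [show (p + r) / 2 + (p - r) / 2 = p by ring,
    show (p + r) / 2 - (p - r) / 2 = r by ring] at centred
  linarith

end TwoPoint

section RademacherAverage

/-- The average of `g` over the `2ᵏ` points `x ± v₁ ± ⋯ ± vₖ`, where `l = [v₁, …, vₖ]`. With values
in an arbitrary `ℝ≥0`-module this also covers measures: `rademacherAverage l Measure.dirac x` is the
law of the corresponding random point. -/
noncomputable def rademacherAverage {E F : Type*} [AddCommGroup E] [AddCommMonoid F]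
    [Module ℝ≥0 F] : List E → (E → F) → E → F
  | [], g, x => g x
  | v :: l, g, x =>
    (2⁻¹ : ℝ≥0) • (rademacherAverage l g (x + v) + rademacherAverage l g (x - v))

variable {E : Type*} [AddCommGroup E] (l : List E) {f g w : E → ℝ}

lemma rademacherAverage_cons (v : E) (g : E → ℝ) (x : E) :
    rademacherAverage (v :: l) g x =
      (rademacherAverage l g (x + v) + rademacherAverage l g (x - v)) / 2 := by
  rw [rademacherAverage, NNReal.smul_def, smul_eq_mul, NNReal.coe_inv, NNReal.coe_ofNat]
  ring

lemma rademacherAverage_mono (h : ∀ x, f x ≤ g x) (x : E) :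
    rademacherAverage l f x ≤ rademacherAverage l g x := by
  induction l generalizing x with
  | nil => exact h x
  | cons v l ih =>
    rw [rademacherAverage_cons, rademacherAverage_cons]
    linarith [ih (x + v), ih (x - v)]

lemma rademacherAverage_add_const (g : E → ℝ) (c : ℝ) (x : E) :
    rademacherAverage l (fun y ↦ g y + c) x = rademacherAverage l g x + c := by
  induction l generalizing x with
  | nil => rfl
  | cons v l ih =>
    simp only [rademacherAverage_cons, ih]
    ring

lemma rademacherAverage_const_mul (c : ℝ) (g : E → ℝ) (x : E) :
    rademacherAverage l (fun y ↦ c * g y) x = c * rademacherAverage l g x := by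
  induction l generalizing x with
  | nil => rfl
  | cons v l ih =>
    simp only [rademacherAverage_cons, ih]
    ring

lemma rademacherAverage_mem_of_convex {s : Set ℝ} (hs : Convex ℝ s) (hg : ∀ x, g x ∈ s) (x : E) :
    rademacherAverage l g x ∈ s := by
  induction l generalizing x with
  | nil => exact hg x
  | cons v l ih =>
    rw [rademacherAverage_cons]
    convert hs.midpoint_mem (ih (x + v)) (ih (x - v)) using 1
    rw [midpoint_eq_smul_add, invOf_eq_inv, smul_eq_mul]
    ring

lemma abs_rademacherAverage_add_sub_le {u : E} (h : ∀ y, |f (y + u) - f y| ≤ w y) (x : E) :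
    |rademacherAverage l f (x + u) - rademacherAverage l f x| ≤ rademacherAverage l w x := by
  induction l generalizing x with
  | nil => exact h x
  | cons v l ih =>
    simp only [rademacherAverage_cons]
    have hadd := ih (x + v)
    have hsub := ih (x - v)
    rw [add_right_comm, abs_le] at hadd
    rw [sub_add_eq_add_sub, abs_le] at hsub
    exact abs_le.2 ⟨by linarith, by linarith⟩

lemma sqrt_add_sq_add_add_sq_le (a b c d : ℝ) :
    √((a + c) ^ 2 + (b + d) ^ 2) ≤ √(a ^ 2 + b ^ 2) + √(c ^ 2 + d ^ 2) := by
  simpa [Complex.norm_eq_sqrt_sq_add_sq] using norm_add_le (⟨a, b⟩ : ℂ) ⟨c, d⟩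

lemma sqrt_rademacherAverage_sq_add_sq_le (g w : E → ℝ) (x : E) :
    √(rademacherAverage l g x ^ 2 + rademacherAverage l w x ^ 2) ≤
      rademacherAverage l (fun y ↦ √(g y ^ 2 + w y ^ 2)) x := by
  induction l generalizing x with
  | nil => exact le_rfl
  | cons v l ih =>
    simp only [rademacherAverage_cons]
    rw [div_pow, div_pow, ← add_div, Real.sqrt_div' _ (by positivity),
      Real.sqrt_sq zero_le_two]
    gcongr
    exact (sqrt_add_sq_add_add_sq_le _ _ _ _).trans (add_le_add (ih _) (ih _))

variable {w : E → E → ℝ} {l}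

lemma sqrt_gaussianProfile_rademacherAverage_sq_add_sq_le {x : E} {s : ℝ} (v : E)
    (hl : gaussianProfile (rademacherAverage l f x) ≤
      rademacherAverage l (fun y ↦ √(gaussianProfile (f y) ^ 2 + (l.map (w · y ^ 2)).sum)) x)
    (hs : |s| ≤ rademacherAverage l (w v) x) :
    √(gaussianProfile (rademacherAverage l f x) ^ 2 + s ^ 2) ≤ rademacherAverage l
      (fun y ↦ √(gaussianProfile (f y) ^ 2 + ((v :: l).map (w · y ^ 2)).sum)) x := by
  have sum_nonneg (y : E) : 0 ≤ (l.map (w · y ^ 2)).sum :=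
    List.sum_nonneg fun a ha ↦ by
      obtain ⟨u, -, rfl⟩ := List.mem_map.1 ha
      positivity
  calc √(gaussianProfile (rademacherAverage l f x) ^ 2 + s ^ 2)
      ≤ √(rademacherAverage l
            (fun y ↦ √(gaussianProfile (f y) ^ 2 + (l.map (w · y ^ 2)).sum)) x ^ 2 +
          rademacherAverage l (w v) x ^ 2) := by
        have := (gaussianProfile_pos (rademacherAverage l f x)).le
        rw [← sq_abs s]
        gcongr
    _ ≤ rademacherAverage l
          (fun y ↦ √(√(gaussianProfile (f y) ^ 2 + (l.map (w · y ^ 2)).sum) ^ 2 + w v y ^ 2)) x :=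
        sqrt_rademacherAverage_sq_add_sq_le l _ _ x
    _ = _ := by
        congr 1
        ext y
        rw [Real.sq_sqrt (add_nonneg (sq_nonneg _) (sum_nonneg y)), List.map_cons, List.sum_cons]
        ring_nf

-- Each induction step is the two-point inequality in direction `v` followed by the Minkowski
-- inequality for the average over the remaining steps.
theorem gaussianProfile_rademacherAverage_le (hf : ∀ x, f x ∈ Ioo 0 1)
    (hadd : ∀ v ∈ l, ∀ y, |f (y + (2 : ℕ) • v) - f y| ≤ 2 * w v y)
    (hsub : ∀ v ∈ l, ∀ y, |f (y - (2 : ℕ) • v) - f y| ≤ 2 * w v y) (x : E) :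
    gaussianProfile (rademacherAverage l f x) ≤
      rademacherAverage l (fun y ↦ √(gaussianProfile (f y) ^ 2 + (l.map (w · y ^ 2)).sum)) x := by
  induction l generalizing x with
  | nil => simp [rademacherAverage, Real.sqrt_sq (gaussianProfile_pos _).le]
  | cons v l ih =>
    replace ih := ih (fun u hu ↦ hadd u (List.mem_cons_of_mem _ hu))
      fun u hu ↦ hsub u (List.mem_cons_of_mem _ hu)
    have mem_Ioo := rademacherAverage_mem_of_convex l (convex_Ioo 0 1) hf
    have bound_sub : |(rademacherAverage l f (x + v) - rademacherAverage l f (x - v)) / 2| ≤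
        rademacherAverage l (w v) (x - v) := by
      have := abs_rademacherAverage_add_sub_le l (hadd v List.mem_cons_self) (x - v)
      rw [show x - v + 2 • v = x + v by abel, rademacherAverage_const_mul] at this
      rw [abs_div, abs_two]
      linarith
    have bound_add : |(rademacherAverage l f (x + v) - rademacherAverage l f (x - v)) / 2| ≤
        rademacherAverage l (w v) (x + v) := by
      have := abs_rademacherAverage_add_sub_le l (u := -(2 • v))
        (fun y ↦ by simpa only [sub_eq_add_neg] using hsub v List.mem_cons_self y) (x + v)
      rw [show x + v + -(2 • v) = x - v by abel, rademacherAverage_const_mul, abs_sub_comm] at this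
      rw [abs_div, abs_two]
      linarith
    rw [rademacherAverage_cons, rademacherAverage_cons]
    refine (gaussianProfile_midpoint_le (mem_Ioo _) (mem_Ioo _)).trans ?_
    linarith [sqrt_gaussianProfile_rademacherAverage_sq_add_sq_le v (ih (x + v)) bound_add,
      sqrt_gaussianProfile_rademacherAverage_sq_add_sq_le v (ih (x - v)) bound_sub]

end RademacherAverage

section CentralLimit

section Law

variable {E : Type*} [AddCommGroup E] [MeasurableSpace E] (l : List E) (x : E)

instance isProbabilityMeasure_rademacherAverage_dirac :
    IsProbabilityMeasure (rademacherAverage l Measure.dirac x) := by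
  induction l generalizing x with
  | nil => exact Measure.dirac.isProbabilityMeasure
  | cons v l ih =>
    have := ih (x + v)
    have := ih (x - v)
    refine ⟨?_⟩
    rw [rademacherAverage, Measure.smul_apply, Measure.add_apply, measure_univ, measure_univ,
      one_add_one_eq_two, ENNReal.smul_def, smul_eq_mul, ENNReal.coe_inv two_ne_zero]
    exact ENNReal.inv_mul_cancel two_ne_zero ENNReal.ofNat_ne_top

variable [MeasurableSingletonClass E] {F : Type*} [NormedAddCommGroup F]

lemma integrable_rademacherAverage_dirac (g : E → F) :
    Integrable g (rademacherAverage l Measure.dirac x) := by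
  induction l generalizing x with
  | nil => exact integrable_dirac enorm_lt_top
  | cons v l ih => exact ((ih _).add_measure (ih _)).smul_measure_nnreal

lemma integral_rademacherAverage_dirac [NormedSpace ℝ F] [CompleteSpace F] (g : E → F) :
    ∫ y, g y ∂(rademacherAverage l Measure.dirac x) = rademacherAverage l g x := by
  induction l generalizing x with
  | nil => exact integral_dirac g x
  | cons v l ih =>
    rw [rademacherAverage, integral_smul_nnreal_measure, integral_add_measure
      (integrable_rademacherAverage_dirac ..) (integrable_rademacherAverage_dirac ..), ih, ih,
      rademacherAverage]

end Law

variable {E : Type*} [NormedAddCommGroup E] [InnerProductSpace ℝ E]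

lemma rademacherAverage_exp_inner (l : List E) (t x : E) :
    rademacherAverage l (fun y ↦ Complex.exp (inner ℝ y t * Complex.I)) x =
      Complex.exp (inner ℝ x t * Complex.I) *
        (l.map fun v ↦ (Real.cos (inner ℝ v t) : ℂ)).prod := by
  induction l generalizing x with
  | nil => simp [rademacherAverage]
  | cons v l ih =>
    simp only [rademacherAverage, ih, sub_eq_add_neg, inner_add_left, inner_neg_left,
      List.map_cons, List.prod_cons, NNReal.smul_def, Complex.real_smul, Complex.ofReal_cos,
      Complex.cos, Complex.ofReal_add, Complex.ofReal_neg, add_mul, neg_mul, Complex.exp_add]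
    push_cast
    ring

lemma charFun_rademacherAverage_dirac [MeasurableSpace E] [MeasurableSingletonClass E]
    (l : List E) (x t : E) :
    charFun (rademacherAverage l Measure.dirac x) t =
      Complex.exp (inner ℝ x t * Complex.I) *
        (l.map fun v ↦ (Real.cos (inner ℝ v t) : ℂ)).prod := by
  rw [charFun, integral_rademacherAverage_dirac, rademacherAverage_exp_inner]

lemma tendsto_cos_inv_sqrt_mul_pow (s : ℝ) :
    Tendsto (fun N : ℕ ↦ (Real.cos ((√N)⁻¹ * s) : ℂ) ^ N) atTop
      (𝓝 (Complex.exp (-s ^ 2 / 2))) := by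
  have clt := tendsto_charFun_inv_sqrt_mul_pow
    (P := rademacherAverage [(1 : ℝ)] Measure.dirac 0) (X := id) aemeasurable_id
    (by rw [integral_rademacherAverage_dirac, rademacherAverage_cons]; simp [rademacherAverage])
    (by rw [integral_rademacherAverage_dirac, rademacherAverage_cons]; simp [rademacherAverage]) s
  simpa [charFun_rademacherAverage_dirac] using clt

@[to_additive]
lemma prod_map_flatMap_replicate {ι α M : Type*} [CommMonoid M] (L : List ι) (N : ℕ) (u : ι → α)
    (f : α → M) :
    ((L.flatMap fun i ↦ List.replicate N (u i)).map f).prod =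
      (L.map fun i ↦ f (u i) ^ N).prod := by
  induction L with
  | nil => rfl
  | cons i L ih => simp [ih]

variable [FiniteDimensional ℝ E]

variable (E) in
/-- The list holding `N` copies of `b i / √N` for each vector `b i` of an orthonormal basis: the
steps of a random walk with fair signs that is asymptotically standard Gaussian. -/
noncomputable def gaussianWalkSteps (N : ℕ) : List E :=
  (List.finRange (Module.finrank ℝ E)).flatMap fun i ↦
    List.replicate N ((√N)⁻¹ • stdOrthonormalBasis ℝ E i)

@[to_additive]
lemma prod_map_gaussianWalkSteps {M : Type*} [CommMonoid M] (N : ℕ) (f : E → M) :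
    ((gaussianWalkSteps E N).map f).prod =
      ∏ i, f ((√N)⁻¹ • stdOrthonormalBasis ℝ E i) ^ N := by
  rw [gaussianWalkSteps, prod_map_flatMap_replicate, Fin.prod_univ_def]

variable [MeasurableSpace E] [BorelSpace E]

lemma tendsto_charFun_gaussianWalkSteps (t : E) :
    Tendsto (fun N ↦ charFun (rademacherAverage (gaussianWalkSteps E N) Measure.dirac 0) t) atTop
      (𝓝 (charFun (stdGaussian E) t)) := by
  have factorization : charFun (stdGaussian E) t =
      ∏ i, Complex.exp (-(inner ℝ (stdOrthonormalBasis ℝ E i) t : ℝ) ^ 2 / 2) := by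
    rw [charFun_stdGaussian, ← Complex.exp_sum, ← Finset.sum_div, Finset.sum_neg_distrib]
    norm_cast
    rw [OrthonormalBasis.sum_sq_inner_right]
  simp only [factorization, charFun_rademacherAverage_dirac, prod_map_gaussianWalkSteps,
    inner_zero_left, Complex.ofReal_zero, zero_mul, Complex.exp_zero, one_mul,
    real_inner_smul_left]
  exact tendsto_finsetProd _ fun i _ ↦ tendsto_cos_inv_sqrt_mul_pow _

theorem tendsto_rademacherAverage_gaussianWalkSteps {g : E → ℝ} {C : ℝ} (hg : Continuous g)
    (hC : ∀ x, ‖g x‖ ≤ C) :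
    Tendsto (fun N ↦ rademacherAverage (gaussianWalkSteps E N) g 0) atTop
      (𝓝 (∫ x, g x ∂(stdGaussian E))) := by
  let walkLaw (N : ℕ) : ProbabilityMeasure E :=
    ⟨rademacherAverage (gaussianWalkSteps E N) Measure.dirac 0, inferInstance⟩
  let gaussianLaw : ProbabilityMeasure E := ⟨stdGaussian E, inferInstance⟩
  have weak : Tendsto walkLaw atTop (𝓝 gaussianLaw) :=
    ProbabilityMeasure.tendsto_of_tendsto_charFun tendsto_charFun_gaussianWalkSteps
  simpa [walkLaw, gaussianLaw, integral_rademacherAverage_dirac] using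
    ProbabilityMeasure.tendsto_iff_forall_integral_tendsto.1 weak
      (BoundedContinuousFunction.ofNormedAddCommGroup g hg C hC)

end CentralLimit

section BobkovInequality

section Taylor

variable {E F : Type*} [NormedAddCommGroup E] [NormedSpace ℝ E] [NormedAddCommGroup F]
  [NormedSpace ℝ F] {f : E → F} {f' : E → E →L[ℝ] F} {C : ℝ≥0}

lemma norm_add_sub_sub_fderiv_le (hf : ∀ x, HasFDerivAt f (f' x) x) (hf' : LipschitzWith C f')
    (x v : E) : ‖f (x + v) - f x - f' x v‖ ≤ C * ‖v‖ ^ 2 := by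
  have lipschitz_bound (y : E) (hy : y ∈ Metric.closedBall x ‖v‖) : ‖f' y - f' x‖ ≤ C * ‖v‖ :=
    (hf'.norm_sub_le y x).trans (by gcongr; exact mem_closedBall_iff_norm.1 hy)
  have mean_value := (convex_closedBall x ‖v‖).norm_image_sub_le_of_norm_hasFDerivWithin_le'
    (fun y _ ↦ (hf y).hasFDerivWithinAt) lipschitz_bound
    (Metric.mem_closedBall_self (norm_nonneg v)) (y := x + v) (by simp)
  rwa [add_sub_cancel_left, mul_assoc, ← sq] at mean_value

lemma norm_fderiv_le_of_norm_sub_le {M : ℝ} (hM : ∀ x y, ‖f x - f y‖ ≤ M)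
    (hf : ∀ x, HasFDerivAt f (f' x) x) (hf' : LipschitzWith C f') (x : E) : ‖f' x‖ ≤ M + C := by
  have M_nonneg : 0 ≤ M := (norm_nonneg _).trans (hM x x)
  refine ContinuousLinearMap.opNorm_le_of_unit_norm (by positivity) fun v hv ↦ ?_
  calc ‖f' x v‖ = ‖(f (x + v) - f x) - (f (x + v) - f x - f' x v)‖ := by rw [sub_sub_cancel]
    _ ≤ ‖f (x + v) - f x‖ + ‖f (x + v) - f x - f' x v‖ := norm_sub_le _ _
    _ ≤ M + C := by
        gcongr
        · exact hM _ _
        · simpa [hv] using norm_add_sub_sub_fderiv_le hf hf' x v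

lemma norm_add_two_nsmul_sub_le (hf : ∀ x, HasFDerivAt f (f' x) x) (hf' : LipschitzWith C f')
    (x v : E) : ‖f (x + (2 : ℕ) • v) - f x‖ ≤ 2 * (‖f' x v‖ + 2 * C * ‖v‖ ^ 2) := by
  have taylor := norm_add_sub_sub_fderiv_le hf hf' x ((2 : ℕ) • v)
  have triangle := norm_le_norm_sub_add (f (x + (2 : ℕ) • v) - f x) (f' x ((2 : ℕ) • v))
  simp only [← ofNat_smul_eq_nsmul ℝ, map_smul, norm_smul, Real.norm_ofNat] at taylor triangle ⊢
  linarith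

end Taylor

lemma sqrt_sq_add_sum_add_sq_le {ι : Type*} [Fintype ι] (a : ℝ) (x : ι → ℝ) {c : ℝ} (hc : 0 ≤ c) :
    √(a ^ 2 + ∑ i, (x i + c) ^ 2) ≤ √(a ^ 2 + ∑ i, x i ^ 2) + √(Fintype.card ι) * c := by
  have minkowski : √(∑ i, (x i + c) ^ 2) ≤ √(∑ i, x i ^ 2) + √(Fintype.card ι) * c := by
    simpa [EuclideanSpace.norm_eq, Real.sqrt_sq hc] using
      norm_add_le (WithLp.toLp 2 x : EuclideanSpace ℝ ι) (WithLp.toLp 2 fun _ ↦ c)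
  calc √(a ^ 2 + ∑ i, (x i + c) ^ 2) = √(a ^ 2 + √(∑ i, (x i + c) ^ 2) ^ 2) := by
        rw [Real.sq_sqrt (by positivity)]
    _ ≤ √((a + 0) ^ 2 + (√(∑ i, x i ^ 2) + √(Fintype.card ι) * c) ^ 2) := by
        rw [add_zero]
        gcongr
    _ ≤ √(a ^ 2 + √(∑ i, x i ^ 2) ^ 2) + √(0 ^ 2 + (√(Fintype.card ι) * c) ^ 2) :=
        sqrt_add_sq_add_add_sq_le ..
    _ = √(a ^ 2 + ∑ i, x i ^ 2) + √(Fintype.card ι) * c := by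
        rw [Real.sq_sqrt (by positivity), zero_pow two_ne_zero, zero_add,
          Real.sqrt_sq (by positivity)]

variable {E : Type*} [NormedAddCommGroup E] [InnerProductSpace ℝ E] [FiniteDimensional ℝ E]

lemma sum_map_gaussianWalkSteps_sq {N : ℕ} (hN : N ≠ 0) (L : E →L[ℝ] ℝ) (K : ℝ) :
    ((gaussianWalkSteps E N).map fun v ↦ (|L v| + K * ‖v‖ ^ 2) ^ 2).sum =
      ∑ i, (|L (stdOrthonormalBasis ℝ E i)| + K * (√N)⁻¹) ^ 2 := by
  rw [sum_map_gaussianWalkSteps]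
  refine Finset.sum_congr rfl fun i _ ↦ ?_
  have sqrt_pos : 0 < √(N : ℝ) := by positivity
  simp only [map_smul, smul_eq_mul, abs_mul, abs_inv, abs_of_pos sqrt_pos, norm_smul,
    OrthonormalBasis.norm_eq_one, norm_inv, Real.norm_of_nonneg sqrt_pos.le, mul_one, nsmul_eq_mul]
  rw [← Real.sq_sqrt (Nat.cast_nonneg (α := ℝ) N), Real.sqrt_sq sqrt_pos.le]
  field_simp

lemma sqrt_sq_add_sum_map_gaussianWalkSteps_le {N : ℕ} (hN : N ≠ 0) (a : ℝ) (L : E →L[ℝ] ℝ)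
    {K : ℝ} (hK : 0 ≤ K) :
    √(a ^ 2 + ((gaussianWalkSteps E N).map fun v ↦ (|L v| + K * ‖v‖ ^ 2) ^ 2).sum) ≤
      √(a ^ 2 + ‖L‖ ^ 2) + √(Module.finrank ℝ E) * (K * (√N)⁻¹) := by
  rw [sum_map_gaussianWalkSteps_sq hN, (stdOrthonormalBasis ℝ E).norm_dual L]
  simpa only [sq_abs, Fintype.card_fin] using sqrt_sq_add_sum_add_sq_le a
    (fun i ↦ |L (stdOrthonormalBasis ℝ E i)|) (mul_nonneg hK (inv_nonneg.2 (Real.sqrt_nonneg N)))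

lemma integral_mem_Ioo {Ω : Type*} [MeasurableSpace Ω] {μ : Measure Ω} [IsProbabilityMeasure μ]
    {f : Ω → ℝ} {a b : ℝ} (hf : Integrable f μ) (hab : ∀ x, f x ∈ Ioo a b) :
    ∫ x, f x ∂μ ∈ Ioo a b := by
  have integral_pos_of_pos {g : Ω → ℝ} (hg : Integrable g μ) (hpos : ∀ x, 0 < g x) :
      0 < ∫ x, g x ∂μ := by
    rw [integral_pos_iff_support_of_nonneg (fun x ↦ (hpos x).le) hg,
      Function.support_eq_univ fun x ↦ (hpos x).ne', measure_univ]
    exact one_pos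
  have lower := integral_pos_of_pos (hf.sub (integrable_const a)) fun x ↦ sub_pos.2 (hab x).1
  have upper := integral_pos_of_pos ((integrable_const b).sub hf) fun x ↦ sub_pos.2 (hab x).2
  rw [integral_sub' hf (integrable_const a)] at lower
  rw [integral_sub' (integrable_const b) hf] at upper
  simp only [integral_const, probReal_univ, one_smul, sub_pos] at lower upper
  exact ⟨lower, upper⟩

lemma continuousOn_gaussianProfile : ContinuousOn gaussianProfile (Ioo 0 1) :=
  fun _ hp ↦ (hasDerivAt_gaussianProfile hp).continuousAt.continuousWithinAt

variable {f : E → ℝ} {f' : E → E →L[ℝ] ℝ} {C : ℝ≥0}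

lemma gaussianProfile_rademacherAverage_gaussianWalkSteps_le (hf : ∀ x, f x ∈ Ioo 0 1)
    (hff' : ∀ x, HasFDerivAt f (f' x) x) (hf' : LipschitzWith C f') {N : ℕ} (hN : N ≠ 0) (x : E) :
    gaussianProfile (rademacherAverage (gaussianWalkSteps E N) f x) ≤
      rademacherAverage (gaussianWalkSteps E N)
        (fun y ↦ √(gaussianProfile (f y) ^ 2 + ‖f' y‖ ^ 2)) x +
      √(Module.finrank ℝ E) * (2 * C * (√N)⁻¹) := by
  have increment (v y : E) := norm_add_two_nsmul_sub_le hff' hf' y v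
  have cube := gaussianProfile_rademacherAverage_le (l := gaussianWalkSteps E N)
    (w := fun v y ↦ |f' y v| + 2 * C * ‖v‖ ^ 2) hf (fun v _ y ↦ increment v y)
    (fun v _ y ↦ by simpa [sub_eq_add_neg] using increment (-v) y) x
  rw [← rademacherAverage_add_const]
  exact cube.trans <| rademacherAverage_mono _
    (fun y ↦ sqrt_sq_add_sum_map_gaussianWalkSteps_le hN _ (f' y) (by positivity)) x

variable [MeasurableSpace E] [BorelSpace E]

theorem gaussianProfile_integral_stdGaussian_le (hf : ∀ x, f x ∈ Ioo 0 1)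
    (hff' : ∀ x, HasFDerivAt f (f' x) x) (hf' : LipschitzWith C f') :
    gaussianProfile (∫ x, f x ∂(stdGaussian E)) ≤
      ∫ x, √(gaussianProfile (f x) ^ 2 + ‖f' x‖ ^ 2) ∂(stdGaussian E) := by
  have continuous_f : Continuous f :=
    continuous_iff_continuousAt.2 fun x ↦ (hff' x).continuousAt
  have bound_f (x : E) : ‖f x‖ ≤ 1 := by
    rw [Real.norm_of_nonneg (hf x).1.le]
    exact (hf x).2.le
  have bound_f' (x : E) : ‖f' x‖ ≤ 1 + C :=
    norm_fderiv_le_of_norm_sub_le (fun y z ↦ abs_sub_le_of_nonneg_of_le (hf y).1.le (hf y).2.le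
      (hf z).1.le (hf z).2.le) hff' hf' x
  have continuous_rhs : Continuous fun x ↦ √(gaussianProfile (f x) ^ 2 + ‖f' x‖ ^ 2) :=
    (((continuousOn_gaussianProfile.comp_continuous continuous_f hf).pow 2).add
      (hf'.continuous.norm.pow 2)).sqrt
  have bound_rhs (x : E) :
      ‖√(gaussianProfile (f x) ^ 2 + ‖f' x‖ ^ 2)‖ ≤ √(1 ^ 2 + (1 + C) ^ 2) := by
    have := (gaussianProfile_pos (f x)).le
    rw [Real.norm_of_nonneg (Real.sqrt_nonneg _)]
    gcongr
    exacts [gaussianProfile_le_one _, bound_f' x]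
  have mean_mem : ∫ x, f x ∂(stdGaussian E) ∈ Ioo 0 1 :=
    integral_mem_Ioo (.of_bound continuous_f.aestronglyMeasurable 1 (.of_forall bound_f)) hf
  have error_tendsto : Tendsto (fun N : ℕ ↦ √(Module.finrank ℝ E) * (2 * C * (√N)⁻¹)) atTop
      (𝓝 (√(Module.finrank ℝ E) * (2 * C * 0))) :=
    ((tendsto_inv_atTop_zero.comp (Real.tendsto_sqrt_atTop.comp
      tendsto_natCast_atTop_atTop)).const_mul _).const_mul _
  have lhs_tendsto := ((hasDerivAt_gaussianProfile mean_mem).continuousAt.tendsto).comp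
    (tendsto_rademacherAverage_gaussianWalkSteps continuous_f bound_f)
  have rhs_tendsto := (tendsto_rademacherAverage_gaussianWalkSteps continuous_rhs bound_rhs).add
    error_tendsto
  rw [mul_zero, mul_zero, add_zero] at rhs_tendsto
  refine le_of_tendsto_of_tendsto lhs_tendsto rhs_tendsto ?_
  filter_upwards [eventually_ne_atTop 0] with N hN
  exact gaussianProfile_rademacherAverage_gaussianWalkSteps_le hf hff' hf' hN 0

end BobkovInequality

section SmoothedCDF

/-- For `τ > 0`, the cumulative distribution function of `D + τ Z`, where `D` is a random variable
on `(Ω, μ)` and `Z` is an independent standard normal variable. -/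
noncomputable def smoothedCDF {Ω : Type*} [MeasurableSpace Ω] (μ : Measure Ω) (D : Ω → ℝ)
    (τ s : ℝ) : ℝ :=
  ∫ x, stdNormalCDF ((s - D x) / τ) ∂μ

variable {Ω : Type*} [MeasurableSpace Ω] {μ : Measure Ω} [IsProbabilityMeasure μ] {D : Ω → ℝ}

lemma integrable_stdNormalCDF_comp (hD : AEStronglyMeasurable D μ) :
    Integrable (fun x ↦ Φ (D x)) μ :=
  .of_bound (continuous_stdNormalCDF.comp_aestronglyMeasurable hD) 1 <| .of_forall fun x ↦ by
    obtain ⟨pos, lt_one⟩ := stdNormalCDF_mem_Ioo (D x)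
    rw [Real.norm_of_nonneg pos.le]
    exact lt_one.le

lemma integrable_smoothedCDF (hD : AEStronglyMeasurable D μ) (τ s : ℝ) :
    Integrable (fun x ↦ Φ ((s - D x) / τ)) μ :=
  integrable_stdNormalCDF_comp
    ((by fun_prop : Continuous fun d : ℝ ↦ (s - d) / τ).comp_aestronglyMeasurable hD)

lemma smoothedCDF_mem_Ioo (hD : AEStronglyMeasurable D μ) (τ s : ℝ) :
    smoothedCDF μ D τ s ∈ Ioo 0 1 :=
  integral_mem_Ioo (integrable_smoothedCDF hD τ s) fun _ ↦ stdNormalCDF_mem_Ioo _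

lemma smoothedCDF_neg (hD : AEStronglyMeasurable D μ) (τ s : ℝ) :
    smoothedCDF μ (-D) τ (-s) = 1 - smoothedCDF μ D τ s := by
  have reflect (x : Ω) : Φ ((-s - (-D) x) / τ) = 1 - Φ ((s - D x) / τ) := by
    rw [← stdNormalCDF_neg, Pi.neg_apply]
    ring_nf
  simp only [smoothedCDF, reflect]
  rw [integral_sub (integrable_const 1) (integrable_smoothedCDF hD τ s), integral_const,
    probReal_univ, one_smul]

variable {τ : ℝ}

lemma mul_real_le_smoothedCDF (hτ : 0 < τ) (hD : AEStronglyMeasurable D μ) (s η : ℝ) :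
    Φ (η / τ) * μ.real {x | D x ≤ s} ≤ smoothedCDF μ D τ (s + η) := by
  have markov := mul_meas_ge_le_integral_of_nonneg
    (.of_forall fun x ↦ (stdNormalCDF_mem_Ioo ((s + η - D x) / τ)).1.le)
    (integrable_smoothedCDF hD τ (s + η)) (Φ (η / τ))
  simpa [strictMono_stdNormalCDF.le_iff_le, div_le_div_iff_of_pos_right hτ, smoothedCDF,
    le_sub_iff_add_le, add_comm η] using markov

lemma smoothedCDF_le_one_sub_mul_real (hτ : 0 < τ) (hD : AEStronglyMeasurable D μ) (t η : ℝ) :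
    smoothedCDF μ D τ (t - η) ≤ 1 - Φ (η / τ) * μ.real {x | t ≤ D x} := by
  have reflected := mul_real_le_smoothedCDF hτ hD.neg (-t) η
  rw [neg_add_eq_sub, ← neg_sub, smoothedCDF_neg hD] at reflected
  simp only [Pi.neg_apply, neg_le_neg_iff] at reflected
  linarith

lemma hasDerivAt_smoothedCDF (hτ : 0 < τ) (hD : AEStronglyMeasurable D μ) (s : ℝ) :
    HasDerivAt (smoothedCDF μ D τ) (∫ x, φ ((s - D x) / τ) * τ⁻¹ ∂μ) s := by
  refine (hasDerivAt_integral_of_dominated_loc_of_deriv_le (bound := fun _ ↦ τ⁻¹)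
    (F := fun s x ↦ Φ ((s - D x) / τ)) (F' := fun s x ↦ φ ((s - D x) / τ) * τ⁻¹)
    univ_mem (.of_forall fun s ↦ (integrable_smoothedCDF hD τ s).aestronglyMeasurable)
    (integrable_smoothedCDF hD τ s) ?_ (.of_forall fun x s _ ↦ ?_) (integrable_const _)
    (.of_forall fun x s _ ↦ ?_)).2
  · have : Continuous fun d ↦ φ ((s - d) / τ) * τ⁻¹ := by
      have := continuous_stdNormalPDF
      fun_prop
    exact this.comp_aestronglyMeasurable hD
  · rw [norm_mul, Real.norm_of_nonneg (stdNormalPDF_pos _).le,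
      Real.norm_of_nonneg (inv_pos.2 hτ).le]
    exact mul_le_of_le_one_left (inv_pos.2 hτ).le (stdNormalPDF_le_one _)
  · refine ((hasDerivAt_stdNormalCDF _).comp s
      (((hasDerivAt_id s).sub_const (D x)).div_const τ)).congr_deriv ?_
    rw [one_div, id]

end SmoothedCDF

section QuantileGrowth

lemma lipschitzWith_smul_of_norm_le {α F : Type*} [PseudoMetricSpace α] [NormedAddCommGroup F]
    [NormedSpace ℝ F] {c : α → ℝ} {g : α → F} {Kc Kg Mc Mg : ℝ≥0} (hc : LipschitzWith Kc c)
    (hg : LipschitzWith Kg g) (hMc : ∀ x, ‖c x‖ ≤ Mc) (hMg : ∀ x, ‖g x‖ ≤ Mg) :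
    LipschitzWith (Mc * Kg + Kc * Mg) fun x ↦ c x • g x := by
  refine LipschitzWith.of_dist_le_mul fun x y ↦ ?_
  calc dist (c x • g x) (c y • g y)
      ≤ dist (c x • g x) (c x • g y) + dist (c x • g y) (c y • g y) := dist_triangle _ _ _
    _ = ‖c x‖ * dist (g x) (g y) + dist (c x) (c y) * ‖g y‖ := by
        simp only [dist_eq_norm, ← smul_sub, ← sub_smul, norm_smul]
    _ ≤ Mc * (Kg * dist x y) + Kc * dist x y * Mg := by
        gcongr
        exacts [hMc x, hg.dist_le_mul x y, hc.dist_le_mul x y, hMg y]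
    _ = ↑(Mc * Kg + Kc * Mg) * dist x y := by
        push_cast
        ring

variable {E : Type*} [NormedAddCommGroup E] [InnerProductSpace ℝ E] [FiniteDimensional ℝ E]
  [MeasurableSpace E] [BorelSpace E]

-- Along `Φ ∘ u` the Gaussian profile and the gradient are both proportional to `φ ∘ u`.
lemma gaussianProfile_integral_stdNormalCDF_comp_le {u : E → ℝ} {u' : E → E →L[ℝ] ℝ} {K C : ℝ≥0}
    (huu' : ∀ x, HasFDerivAt u (u' x) x) (hu : LipschitzWith K u) (hu' : LipschitzWith C u') :
    gaussianProfile (∫ x, Φ (u x) ∂(stdGaussian E)) ≤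
      √(1 + K ^ 2) * ∫ x, φ (u x) ∂(stdGaussian E) := by
  have norm_u'_le (x : E) : ‖u' x‖ ≤ K := (huu' x).le_of_lipschitz hu
  have norm_φ_le (x : E) : ‖φ (u x)‖ ≤ (1 : ℝ≥0) := by
    rw [Real.norm_of_nonneg (stdNormalPDF_pos _).le]
    exact stdNormalPDF_le_one _
  have integrable_φ : Integrable (fun x ↦ φ (u x)) (stdGaussian E) :=
    .of_bound (continuous_stdNormalPDF.comp hu.continuous).aestronglyMeasurable _
      (.of_forall norm_φ_le)
  have sqrt_le (x : E) :
      √(gaussianProfile (Φ (u x)) ^ 2 + ‖φ (u x) • u' x‖ ^ 2) ≤ √(1 + K ^ 2) * φ (u x) := by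
    rw [gaussianProfile_stdNormalCDF, norm_smul, Real.norm_of_nonneg (stdNormalPDF_pos _).le]
    refine Real.sqrt_le_iff.2 ⟨by have := stdNormalPDF_pos (u x); positivity, ?_⟩
    calc φ (u x) ^ 2 + (φ (u x) * ‖u' x‖) ^ 2 ≤ φ (u x) ^ 2 + (φ (u x) * K) ^ 2 := by
          have := (stdNormalPDF_pos (u x)).le
          gcongr
          exact norm_u'_le x
      _ = (√(1 + K ^ 2) * φ (u x)) ^ 2 := by
          rw [mul_pow √_, Real.sq_sqrt (by positivity)]
          ring
  calc gaussianProfile (∫ x, Φ (u x) ∂(stdGaussian E))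
      ≤ ∫ x, √(gaussianProfile (Φ (u x)) ^ 2 + ‖φ (u x) • u' x‖ ^ 2) ∂(stdGaussian E) :=
        gaussianProfile_integral_stdGaussian_le (fun _ ↦ stdNormalCDF_mem_Ioo _)
          (fun x ↦ (hasDerivAt_stdNormalCDF _).comp_hasFDerivAt x (huu' x))
          (lipschitzWith_smul_of_norm_le (lipschitzWith_stdNormalPDF.comp hu) hu'
            norm_φ_le norm_u'_le)
    _ ≤ ∫ x, √(1 + K ^ 2) * φ (u x) ∂(stdGaussian E) :=
        integral_mono_of_nonneg (.of_forall fun _ ↦ Real.sqrt_nonneg _)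
          (integrable_φ.const_mul _) (.of_forall sqrt_le)
    _ = √(1 + K ^ 2) * ∫ x, φ (u x) ∂(stdGaussian E) := integral_const_mul _ _

variable {D : E → ℝ} {D' : E → E →L[ℝ] ℝ} {C : ℝ≥0} {τ : ℝ}

lemma gaussianProfile_smoothedCDF_le (hDD' : ∀ x, HasFDerivAt D (D' x) x)
    (hD : LipschitzWith 1 D) (hD' : LipschitzWith C D') (hτ : 0 < τ) (s : ℝ) :
    gaussianProfile (smoothedCDF (stdGaussian E) D τ s) ≤
      √(1 + τ ^ 2) * ∫ x, φ ((s - D x) / τ) * τ⁻¹ ∂(stdGaussian E) := by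
  have lipschitz : LipschitzWith τ⁻¹.toNNReal fun x ↦ (s - D x) / τ := .of_dist_le' fun x y ↦ by
    rw [Real.dist_eq, ← sub_div, sub_sub_sub_cancel_left, abs_div, abs_of_pos hτ, inv_mul_eq_div,
      dist_comm]
    gcongr
    simpa [Real.dist_eq] using hD.dist_le_mul y x
  have sqrt_eq : √(1 + τ⁻¹ ^ 2) = √(1 + τ ^ 2) * τ⁻¹ := by
    rw [Real.sqrt_eq_iff_mul_self_eq (by positivity) (by positivity), ← sq, mul_pow,
      Real.sq_sqrt (by positivity)]
    field_simp
    ring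
  have bobkov := gaussianProfile_integral_stdNormalCDF_comp_le
    (fun x ↦ ((hDD' x).const_sub s).mul_const τ⁻¹)
    (by simpa only [div_eq_mul_inv] using lipschitz) ((lipschitzWith_smul τ⁻¹).comp hD'.neg)
  rw [Real.coe_toNNReal _ (inv_pos.2 hτ).le, sqrt_eq, mul_assoc, ← integral_const_mul] at bobkov
  simpa only [smoothedCDF, div_eq_mul_inv, mul_comm τ⁻¹] using bobkov

-- The derivative of `Φ⁻¹` at `p` is `(gaussianProfile p)⁻¹`, so the inequality above bounds the
-- derivative of `Φ⁻¹ ∘ smoothedCDF` from below.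
lemma monotone_stdNormalQuantile_smoothedCDF_sub (hDD' : ∀ x, HasFDerivAt D (D' x) x)
    (hD : LipschitzWith 1 D) (hD' : LipschitzWith C D') (hτ : 0 < τ) :
    Monotone fun s ↦
      stdNormalQuantile (smoothedCDF (stdGaussian E) D τ s) - s / √(1 + τ ^ 2) := by
  have meas : AEStronglyMeasurable D (stdGaussian E) := hD.continuous.aestronglyMeasurable
  refine monotone_of_hasDerivAt_nonneg
    (fun s ↦ ((hasDerivAt_stdNormalQuantile (smoothedCDF_mem_Ioo meas τ s)).comp s
      (hasDerivAt_smoothedCDF hτ meas s)).sub ((hasDerivAt_id s).div_const _)) fun s ↦ ?_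
  have profile_pos := gaussianProfile_pos (smoothedCDF (stdGaussian E) D τ s)
  rw [Pi.zero_apply, sub_nonneg, inv_mul_eq_div, div_le_div_iff₀ (by positivity) profile_pos,
    one_mul, mul_comm]
  exact gaussianProfile_smoothedCDF_le hDD' hD hD' hτ s

lemma stdNormalCDF_quantile_add_le_smoothedCDF (hDD' : ∀ x, HasFDerivAt D (D' x) x)
    (hD : LipschitzWith 1 D) (hD' : LipschitzWith C D') (hτ : 0 < τ) {p s t : ℝ}
    (hp : p ∈ Ioo 0 1) (hps : p ≤ smoothedCDF (stdGaussian E) D τ s) (hst : s ≤ t) :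
    Φ (stdNormalQuantile p + (t - s) / √(1 + τ ^ 2)) ≤ smoothedCDF (stdGaussian E) D τ t := by
  have mem_Ioo := smoothedCDF_mem_Ioo (μ := stdGaussian E) hD.continuous.aestronglyMeasurable τ
  have growth := monotone_stdNormalQuantile_smoothedCDF_sub hDD' hD hD' hτ hst
  have quantile_le := monotoneOn_stdNormalQuantile hp (mem_Ioo s) hps
  rw [← stdNormalCDF_stdNormalQuantile (mem_Ioo t)]
  apply strictMono_stdNormalCDF.monotone
  rw [sub_div]
  linarith

end QuantileGrowth

section Mollification

variable {E F G H : Type*} [NormedAddCommGroup E] [NormedAddCommGroup F] [NormedSpace ℝ F]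
  [NormedAddCommGroup G] [NormedSpace ℝ G] [NormedAddCommGroup H] [NormedSpace ℝ H]

lemma lipschitzWith_convolution [MeasurableSpace E] [BorelSpace E] {μ : Measure E}
    [IsFiniteMeasureOnCompacts μ] (L : F →L[ℝ] G →L[ℝ] H) {f : E → F} {d : E → G} {K : ℝ≥0}
    (hf : Continuous f) (hfc : HasCompactSupport f) (hd : LipschitzWith K d) :
    LipschitzWith (‖L‖ * (∫ t, ‖f t‖ ∂μ) * K).toNNReal (f ⋆[L, μ] d) :=
  .of_dist_le' fun x y ↦ by
    have f_integrable : Integrable f μ := hf.integrable_of_hasCompactSupport hfc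
    have exists_at : ConvolutionExists f d L μ :=
      hfc.convolutionExists_left_of_continuous_right L f_integrable.locallyIntegrable hd.continuous
    have norm_le (t : E) : ‖L (f t) (d (x - t)) - L (f t) (d (y - t))‖ ≤
        ‖L‖ * ‖f t‖ * (K * dist x y) := by
      rw [← map_sub]
      refine (L.le_opNorm₂ _ _).trans ?_
      gcongr
      simpa [dist_eq_norm] using hd.dist_le_mul (x - t) (y - t)
    calc dist ((f ⋆[L, μ] d) x) ((f ⋆[L, μ] d) y)
        = ‖∫ t, L (f t) (d (x - t)) - L (f t) (d (y - t)) ∂μ‖ := by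
          rw [dist_eq_norm, convolution_def, convolution_def,
            integral_sub (exists_at x) (exists_at y)]
      _ ≤ ∫ t, ‖L‖ * ‖f t‖ * (K * dist x y) ∂μ :=
          norm_integral_le_of_norm_le ((f_integrable.norm.const_mul _).mul_const _)
            (.of_forall norm_le)
      _ = ‖L‖ * (∫ t, ‖f t‖ ∂μ) * K * dist x y := by
          rw [integral_mul_const, integral_const_mul]
          ring

variable [NormedSpace ℝ E] [FiniteDimensional ℝ E]

lemma exists_lipschitzWith_hasFDerivAt_dist_le {d : E → ℝ} {K : ℝ≥0} (hd : LipschitzWith K d)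
    {η : ℝ} (hη : 0 < η) :
    ∃ (D : E → ℝ) (D' : E → E →L[ℝ] ℝ) (C : ℝ≥0), (∀ x, dist (D x) (d x) ≤ K * η) ∧
      LipschitzWith K D ∧ (∀ x, HasFDerivAt D (D' x) x) ∧ LipschitzWith C D' := by
  borelize E
  let μ : Measure E := Measure.addHaar
  let bump : ContDiffBump (0 : E) := ⟨η / 2, η, half_pos hη, half_lt_self hη⟩
  have bump_contDiff : ContDiff ℝ 1 (bump.normed μ) := bump.contDiff_normed
  have bump_compact : HasCompactSupport (bump.normed μ) := bump.hasCompactSupport_normed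
  have integral_norm_bump : ∫ t, ‖bump.normed μ t‖ ∂μ = 1 := by
    simp only [Real.norm_of_nonneg (bump.nonneg_normed _), bump.integral_normed]
  have norm_lsmul_le : ‖(ContinuousLinearMap.lsmul ℝ ℝ : ℝ →L[ℝ] ℝ →L[ℝ] ℝ)‖ ≤ 1 :=
    ContinuousLinearMap.opNorm_lsmul_le
  refine ⟨bump.normed μ ⋆[ContinuousLinearMap.lsmul ℝ ℝ, μ] d, _, _, fun x ↦ ?_, ?_,
    bump_compact.hasFDerivAt_convolution_left _ bump_contDiff hd.continuous.locallyIntegrable,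
    lipschitzWith_convolution _ (bump_contDiff.continuous_fderiv one_ne_zero)
      (bump_compact.fderiv ℝ) hd⟩
  · refine bump.dist_normed_convolution_le hd.continuous.aestronglyMeasurable fun y hy ↦ ?_
    exact (hd.dist_le_mul y x).trans (by gcongr; exact (Metric.mem_ball.1 hy).le)
  · refine (lipschitzWith_convolution _ bump_contDiff.continuous bump_compact hd).weaken ?_
    rw [integral_norm_bump, mul_one, Real.toNNReal_le_iff_le_coe]
    exact mul_le_of_le_one_left K.2 norm_lsmul_le

end Mollification

section Isoperimetry

variable {E : Type*} [NormedAddCommGroup E] [InnerProductSpace ℝ E] [FiniteDimensional ℝ E]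
  [MeasurableSpace E] [BorelSpace E] {d : E → ℝ}

lemma stdNormalCDF_quantile_add_le_of_lipschitzWith (hd : LipschitzWith 1 d) {b s t η τ : ℝ}
    (hη : 0 < η) (hτ : 0 < τ) (hst : s + 4 * η ≤ t)
    (hb : Φ b ≤ (stdGaussian E).real {x | d x ≤ s}) :
    Φ (stdNormalQuantile (Φ (η / τ) * Φ b) + (t - s - 4 * η) / √(1 + τ ^ 2)) ≤
      1 - Φ (η / τ) * (stdGaussian E).real {x | t ≤ d x} := by
  obtain ⟨D, D', C, dist_le, hD, hDD', hD'⟩ := exists_lipschitzWith_hasFDerivAt_dist_le hd hη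
  have sub_le (x : E) : D x - d x ≤ η ∧ d x - D x ≤ η := by
    simpa [Real.dist_eq, abs_sub_le_iff] using dist_le x
  have sublevel_subset : {x | d x ≤ s} ⊆ {x | D x ≤ s + η} := fun x (hx : d x ≤ s) ↦
    show D x ≤ s + η by linarith [(sub_le x).1]
  have superlevel_subset : {x | t ≤ d x} ⊆ {x | t - η ≤ D x} := fun x (hx : t ≤ d x) ↦
    show t - η ≤ D x by linarith [(sub_le x).2]
  have meas : AEStronglyMeasurable D (stdGaussian E) := hD.continuous.aestronglyMeasurable
  obtain ⟨Φ_pos, Φ_lt_one⟩ := stdNormalCDF_mem_Ioo (η / τ)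
  obtain ⟨b_pos, b_lt_one⟩ := stdNormalCDF_mem_Ioo b
  have le_at_start : Φ (η / τ) * Φ b ≤ smoothedCDF (stdGaussian E) D τ (s + η + η) := by
    refine le_trans ?_ (mul_real_le_smoothedCDF hτ meas (s + η) η)
    gcongr
    exact hb.trans (measureReal_mono sublevel_subset)
  have le_at_end : smoothedCDF (stdGaussian E) D τ (t - η - η) ≤
      1 - Φ (η / τ) * (stdGaussian E).real {x | t ≤ d x} := by
    refine (smoothedCDF_le_one_sub_mul_real hτ meas (t - η) η).trans ?_
    exact sub_le_sub_left
      (mul_le_mul_of_nonneg_left (measureReal_mono superlevel_subset) Φ_pos.le) 1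
  have growth := stdNormalCDF_quantile_add_le_smoothedCDF hDD' hD hD' hτ
    ⟨mul_pos Φ_pos b_pos, mul_lt_one_of_nonneg_of_lt_one_left Φ_pos.le Φ_lt_one b_lt_one.le⟩
    le_at_start (t := t - η - η) (by linarith)
  refine le_trans (le_of_eq ?_) (growth.trans le_at_end)
  ring_nf

-- With `τ = η ^ 2`, both `η` and `τ` vanish while `η / τ` tends to infinity.
lemma stdNormalCDF_add_le_real_lt_of_lipschitzWith (hd : LipschitzWith 1 d) {b s t : ℝ}
    (hst : s < t) (hb : Φ b ≤ (stdGaussian E).real {x | d x ≤ s}) :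
    Φ (b + (t - s)) ≤ (stdGaussian E).real {x | d x < t} := by
  have cdf_tendsto : Tendsto (fun η : ℝ ↦ Φ (η / η ^ 2)) (𝓝[>] 0) (𝓝 1) := by
    refine tendsto_stdNormalCDF_atTop.comp (tendsto_inv_nhdsGT_zero.congr fun η ↦ ?_)
    rw [sq, div_self_mul_self']
  have quantile_tendsto :
      Tendsto (fun η : ℝ ↦ stdNormalQuantile (Φ (η / η ^ 2) * Φ b)) (𝓝[>] 0) (𝓝 b) := by
    have continuousAt := (hasDerivAt_stdNormalQuantile (stdNormalCDF_mem_Ioo b)).continuousAt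
    rw [ContinuousAt, stdNormalQuantile_stdNormalCDF] at continuousAt
    exact continuousAt.comp (by simpa using cdf_tendsto.mul_const (Φ b))
  have shift_tendsto : Tendsto (fun η : ℝ ↦ (t - s - 4 * η) / √(1 + (η ^ 2) ^ 2)) (𝓝[>] 0)
      (𝓝 (t - s)) := by
    have : ContinuousAt (fun η : ℝ ↦ (t - s - 4 * η) / √(1 + (η ^ 2) ^ 2)) 0 :=
      ContinuousAt.div (by fun_prop) (by fun_prop) (by simp)
    simpa [ContinuousAt] using this.tendsto.mono_left nhdsWithin_le_nhds
  have rhs_tendsto := (cdf_tendsto.mul_const ((stdGaussian E).real {x | t ≤ d x})).const_sub 1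
  have real_lt_eq :
      (stdGaussian E).real {x | d x < t} = 1 - 1 * (stdGaussian E).real {x | t ≤ d x} := by
    rw [one_mul, ← probReal_compl_eq_one_sub
      (measurableSet_le measurable_const hd.continuous.measurable)]
    simp only [compl_ofPred, not_le]
  rw [real_lt_eq]
  refine le_of_tendsto_of_tendsto (continuous_stdNormalCDF.continuousAt.tendsto.comp
    (quantile_tendsto.add shift_tendsto)) rhs_tendsto ?_
  filter_upwards [Ioo_mem_nhdsGT (by linarith : 0 < (t - s) / 4)] with η ⟨η_pos, η_lt⟩
  exact stdNormalCDF_quantile_add_le_of_lipschitzWith hd η_pos (by positivity) (by linarith) hb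

theorem gaussian_isoperimetric_general {A : Set E} {a ε : ℝ} (hε : 0 ≤ ε)
    (hA : ENNReal.ofReal (Φ a) ≤ stdGaussian E A) :
    ENNReal.ofReal (Φ (a + ε)) ≤ stdGaussian E {x | ∃ y ∈ A, dist x y ≤ ε} := by
  obtain rfl | ε_pos := hε.eq_or_lt
  · simpa using hA
  have A_nonempty : A.Nonempty := nonempty_of_measure_ne_zero
    ((ENNReal.ofReal_pos.2 (stdNormalCDF_mem_Ioo a).1).trans_le hA).ne'
  have le_sublevel : Φ a ≤ (stdGaussian E).real {x | Metric.infDist x A ≤ 0} :=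
    (ENNReal.ofReal_le_iff_le_toReal (measure_ne_top _ _)).1
      (hA.trans (measure_mono fun x hx ↦ (Metric.infDist_zero_of_mem hx).le))
  have expansion := stdNormalCDF_add_le_real_lt_of_lipschitzWith (Metric.lipschitz_infDist_pt A)
    ε_pos le_sublevel
  rw [sub_zero, measureReal_def, ← ENNReal.ofReal_le_iff_le_toReal (measure_ne_top _ _)]
    at expansion
  refine expansion.trans (measure_mono fun x (hx : Metric.infDist x A < ε) ↦ ?_)
  obtain ⟨y, hy, dist_lt⟩ := (Metric.infDist_lt_iff A_nonempty).1 hx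
  exact ⟨y, hy, dist_lt.le⟩

lemma stdGaussian_euclideanSpace_preimage_ofLp {ι : Type*} [Fintype ι] (A : Set (ι → ℝ)) :
    stdGaussian (EuclideanSpace ℝ ι) (WithLp.ofLp ⁻¹' A) =
      (Measure.pi fun _ ↦ gaussianReal 0 1) A := by
  rw [← map_pi_eq_stdGaussian]
  exact MeasurableEquiv.map_apply (MeasurableEquiv.toLp 2 (ι → ℝ)) _

end Isoperimetry

theorem gaussian_isoperimetric (n : ℕ) (A : Set (Fin n → ℝ)) (hA : MeasurableSet A)
    (a : ℝ) (ε : ℝ) (hε : 0 ≤ ε)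
    (hμA : (Measure.pi fun _ : Fin n => gaussianReal 0 1) A =
      ENNReal.ofReal (stdNormalCDF a)) :
    (Measure.pi fun _ : Fin n => gaussianReal 0 1)
        {x | ∃ y ∈ A, Real.sqrt (∑ i, (x i - y i) ^ 2) ≤ ε} ≥
      ENNReal.ofReal (stdNormalCDF (a + ε)) := by
  rw [← stdGaussian_euclideanSpace_preimage_ofLp] at hμA ⊢
  refine (gaussian_isoperimetric_general hε hμA.ge).trans (measure_mono ?_)
  rintro x ⟨y, hy, dist_le⟩
  exact ⟨y, hy, by simpa [EuclideanSpace.dist_eq, Real.dist_eq] using dist_le⟩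
end

section
/- (Sparse adversarial examples) Let ρ be a probability density on [0,1]ⁿ with supremum U, and R ⊂ [0,1]ⁿ measurable with vol[R] ≤ 1/2. Then the probability under ρ that a sample lies in R and cannot be moved into Rᶜ by changing at most ε coordinates is at most 2U·exp(-ε²/n). -/
open Real MeasureTheory

/-- The Hamming (ℓ₀) distance on ℝⁿ: the number of differing coordinates. -/
noncomputable def l0Dist {n : ℕ} (x y : Fin n → ℝ) : ℕ :=
  (Finset.univ.filter fun i => x i ≠ y i).card

/-!
The Hamming distance `d` to a set `A` changes by at most `1` when a single coordinate is changed,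
so by McDiarmid's argument `d - 𝔼 d` is sub-Gaussian with variance proxy `n / 4`. Multiplying the
Chernoff bounds for the lower tail `d ≤ 0` and the upper tail `ε ≤ d` at the same parameter, the
unknown mean cancels: `ℙ(A) * ℙ(ε ≤ d) ≤ exp (-ε² / n)`. The distance to a merely measurable set
may fail to be measurable, whereas for compact `A` it is lower semicontinuous; inner regularity
passes from compact to measurable sets. Taking for `A` the complement of `R` in the cube, of
measure at least `1 / 2`, and integrating `ρ ≤ U` gives the theorem.
-/

open ProbabilityTheory
open scoped NNReal ENNReal Topology

section SubGaussian

variable {Ω Ω' : Type*} {mΩ : MeasurableSpace Ω} {mΩ' : MeasurableSpace Ω'}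
  {μ : Measure Ω} {ν : Measure Ω'}

lemma hasSubgaussianMGF_of_forall_sub_le [IsProbabilityMeasure μ] {X : Ω → ℝ}
    (hX : AEMeasurable X μ) {c : ℝ≥0} (hc : ∀ ω ω', X ω - X ω' ≤ c) :
    HasSubgaussianMGF (fun ω ↦ X ω - μ[X]) ((c / 2) ^ 2) μ := by
  have : Nonempty Ω := nonempty_of_isProbabilityMeasure μ
  have hbdd : BddBelow (Set.range X) := by
    obtain ⟨ω₀⟩ := ‹Nonempty Ω›
    exact ⟨X ω₀ - c, Set.forall_mem_range.2 fun ω ↦ sub_le_comm.1 (hc ω₀ ω)⟩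
  have hmem : ∀ ω, X ω ∈ Set.Icc (⨅ ω', X ω') ((⨅ ω', X ω') + c) := fun ω ↦
    ⟨ciInf_le hbdd ω, sub_le_iff_le_add.1 (le_ciInf fun ω' ↦ sub_le_comm.1 (hc ω ω'))⟩
  simpa using hasSubgaussianMGF_of_mem_Icc hX (ae_of_all _ hmem)

lemma mul_measureReal_le_exp_of_hasSubgaussianMGF [IsFiniteMeasure μ] {X : Ω → ℝ} {c : ℝ≥0}
    (hX : HasSubgaussianMGF X c μ) {a b : ℝ} (hab : a ≤ b) :
    μ.real {ω | X ω ≤ a} * μ.real {ω | b ≤ X ω} ≤ exp (-(b - a) ^ 2 / (4 * c)) := by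
  -- The minimiser of `c * t ^ 2 - t * (b - a)`, the exponent of the product of the two Chernoff
  -- bounds; at `c = 0` it is the junk value `0` and the claim reduces to `≤ 1`.
  set t : ℝ := (b - a) / (2 * c)
  have ht : 0 ≤ t := div_nonneg (sub_nonneg.2 hab) (by positivity)
  have hlower : μ.real {ω | X ω ≤ a} ≤ exp (t * a) * exp (c * t ^ 2 / 2) := by
    calc μ.real {ω | X ω ≤ a}
        ≤ exp (- -t * a) * mgf X μ (-t) :=
          measure_le_le_exp_mul_mgf a (neg_nonpos.2 ht) (hX.integrable_exp_mul (-t))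
      _ ≤ exp (- -t * a) * exp (c * (-t) ^ 2 / 2) := by
          gcongr
          exact hX.mgf_le (-t)
      _ = exp (t * a) * exp (c * t ^ 2 / 2) := by rw [neg_neg, neg_sq]
  have hupper : μ.real {ω | b ≤ X ω} ≤ exp (-t * b) * exp (c * t ^ 2 / 2) := by
    refine (measure_ge_le_exp_mul_mgf b ht (hX.integrable_exp_mul t)).trans ?_
    gcongr
    exact hX.mgf_le t
  refine (mul_le_mul hlower hupper measureReal_nonneg (by positivity)).trans_eq ?_
  simp only [← exp_add, t]
  congr 1
  rcases eq_or_ne c 0 with rfl | hc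
  · simp
  · field_simp
    ring

lemma hasSubgaussianMGF_add_prod [SFinite μ] [SFinite ν] {X : Ω → ℝ} {Y : Ω × Ω' → ℝ}
    {cX cY : ℝ≥0} (hX : HasSubgaussianMGF X cX μ) (hYm : AEMeasurable Y (μ.prod ν))
    (hY : ∀ ω, HasSubgaussianMGF (fun ω' ↦ Y (ω, ω')) cY ν) :
    HasSubgaussianMGF (fun p ↦ X p.1 + Y p) (cX + cY) (μ.prod ν) := by
  have hsection (t : ℝ) (ω : Ω) : ∫ ω', exp (t * (X ω + Y (ω, ω'))) ∂ν
      = exp (t * X ω) * mgf (fun ω' ↦ Y (ω, ω')) ν t := by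
    simp_rw [mul_add, exp_add, integral_const_mul, mgf]
  have hsection_le (t : ℝ) (ω : Ω) : ∫ ω', exp (t * (X ω + Y (ω, ω'))) ∂ν
      ≤ exp (t * X ω) * exp (cY * t ^ 2 / 2) := by
    rw [hsection]
    gcongr
    exact (hY ω).mgf_le t
  have hmeas (t : ℝ) :
      AEStronglyMeasurable (fun p : Ω × Ω' ↦ exp (t * (X p.1 + Y p))) (μ.prod ν) :=
    ((hX.aemeasurable.comp_fst.add hYm).const_mul t).exp.aestronglyMeasurable
  have hexp_int (t : ℝ) : Integrable (fun p : Ω × Ω' ↦ exp (t * (X p.1 + Y p))) (μ.prod ν) := by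
    refine (integrable_prod_iff (hmeas t)).2 ⟨ae_of_all _ fun ω ↦ ?_, ?_⟩
    · simp_rw [mul_add, exp_add]
      exact ((hY ω).integrable_exp_mul t).const_mul _
    · refine ((hX.integrable_exp_mul t).mul_const (exp (cY * t ^ 2 / 2))).mono'
        (hmeas t).norm.integral_prod_right' (ae_of_all _ fun ω ↦ ?_)
      simp_rw [norm_of_nonneg (exp_nonneg _)]
      rw [norm_of_nonneg (integral_nonneg fun _ ↦ exp_nonneg _)]
      exact hsection_le t ω
  refine ⟨hexp_int, fun t ↦ ?_⟩
  calc mgf (fun p ↦ X p.1 + Y p) (μ.prod ν) t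
      = ∫ ω, ∫ ω', exp (t * (X ω + Y (ω, ω'))) ∂ν ∂μ := integral_prod _ (hexp_int t)
    _ ≤ ∫ ω, exp (t * X ω) * exp (cY * t ^ 2 / 2) ∂μ :=
        integral_mono (hexp_int t).integral_prod_left ((hX.integrable_exp_mul t).mul_const _)
          (hsection_le t)
    _ = mgf X μ t * exp (cY * t ^ 2 / 2) := integral_mul_const _ _
    _ ≤ exp (cX * t ^ 2 / 2) * exp (cY * t ^ 2 / 2) := by
        gcongr
        exact hX.mgf_le t
    _ = exp ((cX + cY : ℝ≥0) * t ^ 2 / 2) := by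
        rw [← exp_add]
        push_cast
        ring_nf

lemma integrable_of_hasSubgaussianMGF_sub_const [IsFiniteMeasure μ] {X : Ω → ℝ} {c : ℝ≥0} {a : ℝ}
    (hX : HasSubgaussianMGF (fun ω ↦ X ω - a) c μ) : Integrable X μ := by
  simpa only [Pi.add_def, sub_add_cancel] using hX.integrable.add (integrable_const a)

lemma hasSubgaussianMGF_sub_integral_prod [IsFiniteMeasure μ] [IsFiniteMeasure ν]
    {f : Ω × Ω' → ℝ} (hf : Measurable f) {cμ cν : ℝ≥0}
    (hmean : HasSubgaussianMGF
      (fun ω ↦ ∫ ω', f (ω, ω') ∂ν - ∫ ω₁, ∫ ω', f (ω₁, ω') ∂ν ∂μ) cμ μ)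
    (hsection : ∀ ω, HasSubgaussianMGF (fun ω' ↦ f (ω, ω') - ∫ ω₁', f (ω, ω₁') ∂ν) cν ν) :
    HasSubgaussianMGF (fun p ↦ f p - ∫ q, f q ∂μ.prod ν) (cμ + cν) (μ.prod ν) := by
  have hsectionMeas : Measurable fun p : Ω × Ω' ↦ f p - ∫ ω', f (p.1, ω') ∂ν :=
    hf.sub (hf.stronglyMeasurable.integral_prod_right'.measurable.comp measurable_fst)
  have hsum := hasSubgaussianMGF_add_prod hmean hsectionMeas.aemeasurable hsection
  simp only [sub_add_sub_cancel'] at hsum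
  rwa [integral_prod f (integrable_of_hasSubgaussianMGF_sub_const hsum)]

lemma hasSubgaussianMGF_sub_integral_of_measurePreserving {e : Ω ≃ᵐ Ω'}
    (he : MeasurePreserving e μ ν) {f : Ω' → ℝ} {c : ℝ≥0}
    (hf : HasSubgaussianMGF (fun ω ↦ f (e ω) - ∫ ω', f (e ω') ∂μ) c μ) :
    HasSubgaussianMGF (fun ω ↦ f ω - ∫ ω', f ω' ∂ν) c ν := by
  rw [he.integral_comp e.measurableEmbedding, ← (he.symm e).map_eq] at hf
  simpa only [Function.comp_def, MeasurableEquiv.apply_symm_apply] using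
    hf.of_map e.symm.measurable.aemeasurable

end SubGaussian

section BoundedDifferences

universe u v

/-- The bounded differences property, the hypothesis of McDiarmid's inequality: changing the `i`-th
coordinate alone changes `f` by at most `c i`. The inequality is symmetric in `x` and `y`, so no
absolute value is needed. -/
def HasBoundedDifferences {ι : Type*} {X : ι → Type*} (f : (∀ i, X i) → ℝ) (c : ι → ℝ≥0) : Prop :=
  ∀ ⦃i x y⦄, (∀ j ≠ i, x j = y j) → f x - f y ≤ c i

namespace HasBoundedDifferences

variable {ι : Type u} {ι' : Type*}

section

variable {X : ι → Type*} {c : ι → ℝ≥0}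

lemma comp_piCongrLeft {f : (∀ i, X i) → ℝ} (hf : HasBoundedDifferences f c) (e : ι' ≃ ι) :
    HasBoundedDifferences (f ∘ Equiv.piCongrLeft X e) (c ∘ e) := by
  refine fun i x y hxy ↦ hf fun j hj ↦ ?_
  obtain ⟨k, rfl⟩ := e.surjective j
  simpa only [Equiv.piCongrLeft_apply_apply] using hxy k fun h ↦ hj (congrArg e h)

lemma integral {Ω : Type*} {mΩ : MeasurableSpace Ω} {ν : Measure Ω} [IsProbabilityMeasure ν]
    {g : (∀ i, X i) → Ω → ℝ} (hg : ∀ ω, HasBoundedDifferences (fun x ↦ g x ω) c)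
    (hg_int : ∀ x, Integrable (g x) ν) : HasBoundedDifferences (fun x ↦ ∫ ω, g x ω ∂ν) c := by
  intro i x y hxy
  calc ∫ ω, g x ω ∂ν - ∫ ω, g y ω ∂ν
      = ∫ ω, (g x ω - g y ω) ∂ν := (integral_sub (hg_int x) (hg_int y)).symm
    _ ≤ ∫ _, (c i : ℝ) ∂ν :=
        integral_mono ((hg_int x).sub (hg_int y)) (integrable_const _) fun ω ↦ hg ω hxy
    _ = c i := by simp

end

section Option

variable {X : Option ι → Type*} [∀ i, MeasurableSpace (X i)] {f : (∀ i, X i) → ℝ}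
  {c : Option ι → ℝ≥0}

lemma comp_piOptionEquivProd_symm (hf : HasBoundedDifferences f c) (a : X none) :
    HasBoundedDifferences (fun x ↦ f ((MeasurableEquiv.piOptionEquivProd X).symm (x, a)))
      (fun i ↦ c (some i)) := by
  refine fun i x y hxy ↦ hf fun j hj ↦ ?_
  cases j with
  | none => rfl
  | some j => exact hxy j (by simpa using hj)

lemma piOptionEquivProd_symm_sub_le (hf : HasBoundedDifferences f c) (x : ∀ i, X (some i))
    (a b : X none) :
    f ((MeasurableEquiv.piOptionEquivProd X).symm (x, a))
      - f ((MeasurableEquiv.piOptionEquivProd X).symm (x, b)) ≤ c none := by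
  refine hf fun j hj ↦ ?_
  obtain ⟨i, rfl⟩ := Option.ne_none_iff_exists'.1 hj
  rfl

end Option

theorem hasSubgaussianMGF_sub_integral {ι : Type u} [hι : Fintype ι] {X : ι → Type v}
    [∀ i, MeasurableSpace (X i)] {f : (∀ i, X i) → ℝ} {c : ι → ℝ≥0}
    (hf : HasBoundedDifferences f c) (hfm : Measurable f)
    (μ : ∀ i, Measure (X i)) [∀ i, IsProbabilityMeasure (μ i)] :
    HasSubgaussianMGF (fun x ↦ f x - ∫ y, f y ∂Measure.pi μ) (∑ i, (c i / 2) ^ 2)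
      (Measure.pi μ) := by
  revert X c
  refine no_implicit_lambda% (Fintype.induction_empty_option ?_ ?_ ?_ ι (h_fintype := hι))
  · intro ι ι' _ e ih X _ f c hf hfm μ _
    let := Fintype.ofEquiv ι' e.symm
    have hfe : Measurable (f ∘ Equiv.piCongrLeft X e) :=
      hfm.comp (MeasurableEquiv.piCongrLeft X e).measurable
    rw [← e.sum_comp]
    exact hasSubgaussianMGF_sub_integral_of_measurePreserving
      (measurePreserving_piCongrLeft μ e) (ih (hf.comp_piCongrLeft e) hfe fun i ↦ μ (e i))
  · intro X _ f c _ _ μ _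
    have hconst (x : ∀ i, X i) : f x = f default := congrArg f (Subsingleton.elim _ _)
    simp [hconst]
  · intro ι _ ih X _ f c hf hfm μ _
    have he : MeasurePreserving (MeasurableEquiv.piOptionEquivProd X).symm
        ((Measure.pi fun i ↦ μ (some i)).prod (μ none)) (Measure.pi μ) :=
      ⟨(MeasurableEquiv.piOptionEquivProd X).symm.measurable, Measure.pi_map_piOptionEquivProd μ⟩
    have hfe : Measurable (f ∘ (MeasurableEquiv.piOptionEquivProd X).symm) :=
      hfm.comp he.measurable
    have hsection (x : ∀ i, X (some i)) := hasSubgaussianMGF_of_forall_sub_le (μ := μ none)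
      (hfe.comp measurable_prodMk_left).aemeasurable (hf.piOptionEquivProd_symm_sub_le x)
    refine hasSubgaussianMGF_sub_integral_of_measurePreserving he ?_
    rw [Fintype.sum_option, add_comm]
    refine hasSubgaussianMGF_sub_integral_prod hfe (ih ?_ ?_ _) hsection
    · exact .integral hf.comp_piOptionEquivProd_symm fun x ↦
        integrable_of_hasSubgaussianMGF_sub_const (hsection x)
    · exact hfe.stronglyMeasurable.integral_prod_right'.measurable

end HasBoundedDifferences

end BoundedDifferences

section Hamming

variable {ι : Type*} [Fintype ι] {X : ι → Type*} [∀ i, DecidableEq (X i)]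

lemma hammingDist_le_one_of_forall_ne {i : ι} {x y : ∀ i, X i} (h : ∀ j ≠ i, x j = y j) :
    hammingDist x y ≤ 1 :=
  (Finset.card_le_card fun j hj ↦ Finset.mem_singleton.2
    (not_imp_comm.1 (h j) (Finset.mem_filter.1 hj).2)).trans_eq (Finset.card_singleton i)

/-- The Hamming distance from a point to a set, with the junk value `0` for the empty set. -/
noncomputable def hammingInfDist (A : Set (∀ i, X i)) (x : ∀ i, X i) : ℝ :=
  Metric.infDist (Hamming.toHamming x) (Hamming.ofHamming ⁻¹' A)

variable {A : Set (∀ i, X i)} {x : ∀ i, X i}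

lemma le_hammingInfDist (hA : A.Nonempty) {r : ℝ} :
    r ≤ hammingInfDist A x ↔ ∀ y ∈ A, r ≤ hammingDist x y :=
  Metric.le_infDist hA

lemma hammingInfDist_of_mem (hx : x ∈ A) : hammingInfDist A x = 0 :=
  Metric.infDist_zero_of_mem hx

lemma exists_hammingInfDist_eq (hA : A.Nonempty) (x : ∀ i, X i) :
    ∃ y ∈ A, hammingInfDist A x = hammingDist x y := by
  have hmin : ∃ y ∈ A, ∀ z ∈ A, hammingDist x y ≤ hammingDist x z :=
    ⟨Function.argminOn (hammingDist x) A hA, Function.argminOn_mem _ _ _,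
      fun z hz ↦ Function.argminOn_le _ _ hz⟩
  obtain ⟨y, hyA, hy⟩ := hmin
  exact ⟨y, hyA, le_antisymm (Metric.infDist_le_dist_of_mem (s := Hamming.ofHamming ⁻¹' A) hyA)
    ((le_hammingInfDist hA).2 fun z hz ↦ Nat.cast_le.2 (hy z hz))⟩

lemma hasBoundedDifferences_hammingInfDist (A : Set (∀ i, X i)) :
    HasBoundedDifferences (hammingInfDist A) 1 := by
  intro i x y hxy
  calc hammingInfDist A x - hammingInfDist A y
      ≤ hammingDist x y :=
        sub_le_iff_le_add'.2 Metric.infDist_le_infDist_add_dist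
    _ ≤ 1 := mod_cast hammingDist_le_one_of_forall_ne hxy

variable [∀ i, TopologicalSpace (X i)] [∀ i, T2Space (X i)]

lemma lowerSemicontinuous_hammingDist :
    LowerSemicontinuous fun p : (∀ i, X i) × (∀ i, X i) ↦ (hammingDist p.1 p.2 : ℝ) := by
  intro p r hr
  have hne : ∀ᶠ q in 𝓝 p, ∀ i, p.1 i ≠ p.2 i → q.1 i ≠ q.2 i := by
    refine Filter.eventually_all.2 fun i ↦ Filter.eventually_imp_distrib_left.2 fun hi ↦ ?_
    exact (isOpen_ne_fun (by fun_prop) (by fun_prop)).eventually_mem hi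
  filter_upwards [hne] with q hq
  refine hr.trans_le (Nat.cast_le.2 (Finset.card_le_card ?_))
  exact Finset.monotone_filter_right _ fun i _ ↦ hq i

lemma lowerSemicontinuous_hammingInfDist {K : Set (∀ i, X i)} (hK : IsCompact K) :
    LowerSemicontinuous (hammingInfDist K) := by
  rcases K.eq_empty_or_nonempty with rfl | hne
  · have hzero : hammingInfDist (∅ : Set (∀ i, X i)) = fun _ ↦ 0 :=
      funext fun _ ↦ Metric.infDist_empty
    exact hzero ▸ lowerSemicontinuous_const
  intro x r hr
  have hnear : ∀ᶠ z in 𝓝 x, ∀ y ∈ K, r < hammingDist z y :=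
    hK.eventually_forall_of_forall_eventually fun y hy ↦
      lowerSemicontinuous_hammingDist (x, y) r (hr.trans_le ((le_hammingInfDist hne).1 le_rfl y hy))
  filter_upwards [hnear] with z hz
  obtain ⟨y, hyK, hy⟩ := exists_hammingInfDist_eq hne z
  exact hy ▸ hz y hyK

end Hamming

section Concentration

variable {ι : Type*} [Fintype ι] {X : ι → Type*} [∀ i, DecidableEq (X i)]
  [∀ i, TopologicalSpace (X i)] [∀ i, MeasurableSpace (X i)] [∀ i, BorelSpace (X i)]
  (μ : ∀ i, Measure (X i))

lemma measureReal_pi_mul_le_exp_of_isCompact [∀ i, T2Space (X i)]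
    [∀ i, SecondCountableTopology (X i)] [∀ i, IsProbabilityMeasure (μ i)]
    {K : Set (∀ i, X i)} (hK : IsCompact K) {ε : ℝ} (hε : 0 ≤ ε) :
    (Measure.pi μ).real K * (Measure.pi μ).real {x | ε ≤ hammingInfDist K x} ≤
      exp (-ε ^ 2 / Fintype.card ι) := by
  set m : ℝ := ∫ x, hammingInfDist K x ∂Measure.pi μ
  have hsub : HasSubgaussianMGF (fun x ↦ hammingInfDist K x - m)
      (∑ _ : ι, (1 / 2) ^ 2) (Measure.pi μ) :=
    (hasBoundedDifferences_hammingInfDist K).hasSubgaussianMGF_sub_integral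
      (lowerSemicontinuous_hammingInfDist hK).measurable μ
  have hproxy : (4 : ℝ) * (∑ _ : ι, (1 / 2) ^ 2 : ℝ≥0) = Fintype.card ι := by
    push_cast
    rw [Finset.sum_const, Finset.card_univ, nsmul_eq_mul]
    ring
  have hK_subset : K ⊆ {x | hammingInfDist K x - m ≤ 0 - m} := fun x hx ↦
    sub_le_sub_right (hammingInfDist_of_mem hx).le m
  calc (Measure.pi μ).real K * (Measure.pi μ).real {x | ε ≤ hammingInfDist K x}
      ≤ (Measure.pi μ).real {x | hammingInfDist K x - m ≤ 0 - m} *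
          (Measure.pi μ).real {x | ε - m ≤ hammingInfDist K x - m} := by
        simp only [sub_le_sub_iff_right] at hK_subset ⊢
        gcongr
        exact measure_ne_top _ _
    _ ≤ exp (-((ε - m) - (0 - m)) ^ 2 / (4 * (∑ _ : ι, (1 / 2) ^ 2 : ℝ≥0))) :=
        mul_measureReal_le_exp_of_hasSubgaussianMGF hsub (sub_le_sub_right hε m)
    _ = exp (-ε ^ 2 / Fintype.card ι) := by
        rw [hproxy, sub_sub_sub_cancel_right, sub_zero]

variable [∀ i, PolishSpace (X i)]

theorem measure_pi_mul_le_exp_of_le_hammingDist [∀ i, IsProbabilityMeasure (μ i)]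
    {A S : Set (∀ i, X i)} (hA : MeasurableSet A) {ε : ℝ} (hε : 0 ≤ ε)
    (hdist : ∀ x ∈ S, ∀ y ∈ A, ε ≤ hammingDist x y) :
    Measure.pi μ A * Measure.pi μ S ≤ ENNReal.ofReal (exp (-ε ^ 2 / Fintype.card ι)) := by
  rw [hA.measure_eq_iSup_isCompact]
  simp only [ENNReal.iSup_mul, iSup_le_iff]
  intro K hKA hK
  rcases K.eq_empty_or_nonempty with rfl | hne
  · simp
  have hS : S ⊆ {x | ε ≤ hammingInfDist K x} := fun x hx ↦
    (le_hammingInfDist hne).2 fun y hy ↦ hdist x hx y (hKA hy)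
  calc Measure.pi μ K * Measure.pi μ S
      ≤ Measure.pi μ K * Measure.pi μ {x | ε ≤ hammingInfDist K x} := by gcongr
    _ = ENNReal.ofReal
          ((Measure.pi μ).real K * (Measure.pi μ).real {x | ε ≤ hammingInfDist K x}) := by
        rw [ENNReal.ofReal_mul measureReal_nonneg, ofReal_measureReal, ofReal_measureReal]
    _ ≤ ENNReal.ofReal (exp (-ε ^ 2 / Fintype.card ι)) :=
        ENNReal.ofReal_le_ofReal (measureReal_pi_mul_le_exp_of_isCompact μ hK hε)

lemma measureReal_pi_le_two_mul_exp_of_le_hammingDist [∀ i, IsProbabilityMeasure (μ i)]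
    {A S : Set (∀ i, X i)} (hA : MeasurableSet A) (hA_half : 1 / 2 ≤ (Measure.pi μ).real A)
    {ε : ℝ} (hε : 0 ≤ ε) (hdist : ∀ x ∈ S, ∀ y ∈ A, ε ≤ hammingDist x y) :
    (Measure.pi μ).real S ≤ 2 * exp (-ε ^ 2 / Fintype.card ι) := by
  have hprod : (Measure.pi μ).real A * (Measure.pi μ).real S ≤ exp (-ε ^ 2 / Fintype.card ι) := by
    rw [measureReal_def, measureReal_def, ← ENNReal.toReal_mul]
    exact ENNReal.toReal_le_of_le_ofReal (exp_nonneg _)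
      (measure_pi_mul_le_exp_of_le_hammingDist μ hA hε hdist)
  linarith [mul_le_mul_of_nonneg_right hA_half (measureReal_nonneg (μ := Measure.pi μ) (s := S))]

lemma measureReal_pi_le_two_mul_exp_of_subset_univ_pi [∀ i, SigmaFinite (μ i)]
    {s : ∀ i, Set (X i)} (hs : ∀ i, MeasurableSet (s i)) (hμs : ∀ i, μ i (s i) = 1)
    {R S : Set (∀ i, X i)} (hR : MeasurableSet R) (hRs : R ⊆ Set.univ.pi s)
    (hRμ : Measure.pi μ R ≤ ENNReal.ofReal (1 / 2)) (hSs : S ⊆ Set.univ.pi s) {ε : ℝ}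
    (hε : 0 ≤ ε) (hdist : ∀ x ∈ S, ∀ y ∈ Set.univ.pi s \ R, ε ≤ hammingDist x y) :
    (Measure.pi μ).real S ≤ 2 * exp (-ε ^ 2 / Fintype.card ι) := by
  have (i : ι) : IsProbabilityMeasure ((μ i).restrict (s i)) := ⟨by simp [hμs]⟩
  have hrestrict {T : Set (∀ i, X i)} (hT : T ⊆ Set.univ.pi s) :
      (Measure.pi fun i ↦ (μ i).restrict (s i)).real T = (Measure.pi μ).real T := by
    rw [← Measure.restrict_pi_pi, measureReal_def, Measure.restrict_eq_self _ hT, measureReal_def]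
  have hbox : (Measure.pi μ).real (Set.univ.pi s) = 1 := by simp [measureReal_def, hμs]
  have hR_half : (Measure.pi μ).real R ≤ 1 / 2 :=
    ENNReal.toReal_le_of_le_ofReal (by norm_num) hRμ
  have hdiff : 1 / 2 ≤ (Measure.pi fun i ↦ (μ i).restrict (s i)).real (Set.univ.pi s \ R) := by
    rw [hrestrict Set.sdiff_subset, measureReal_sdiff hRs hR (by simp [hμs]), hbox]
    linarith
  rw [← hrestrict hSs]
  exact measureReal_pi_le_two_mul_exp_of_le_hammingDist _
    ((MeasurableSet.univ_pi hs).diff hR) hdiff hε hdist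

end Concentration

theorem sparse_adversarial_examples_general {ι : Type*} [Fintype ι] {X : ι → Type*}
    [∀ i, DecidableEq (X i)] [∀ i, TopologicalSpace (X i)] [∀ i, PolishSpace (X i)]
    [∀ i, MeasurableSpace (X i)] [∀ i, BorelSpace (X i)]
    (μ : ∀ i, Measure (X i)) [∀ i, SigmaFinite (μ i)] {s : ∀ i, Set (X i)}
    (hs : ∀ i, MeasurableSet (s i)) (hμs : ∀ i, μ i (s i) = 1)
    {ρ : (∀ i, X i) → ℝ} (hρ : Measurable ρ) (hρ0 : ∀ x, 0 ≤ ρ x) {U : ℝ} (hU : ∀ x, ρ x ≤ U)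
    {R : Set (∀ i, X i)} (hR : MeasurableSet R) (hRs : R ⊆ Set.univ.pi s)
    (hRμ : Measure.pi μ R ≤ ENNReal.ofReal (1 / 2)) (ε : ℕ) :
    ∫ x in {x ∈ R | ∀ y ∈ Set.univ.pi s \ R, hammingDist x y > ε}, ρ x ∂Measure.pi μ ≤
      2 * U * exp (-(ε : ℝ) ^ 2 / Fintype.card ι) := by
  set S : Set (∀ i, X i) := {x ∈ R | ∀ y ∈ Set.univ.pi s \ R, hammingDist x y > ε}
  have hbox : Measure.pi μ (Set.univ.pi s) = 1 := by simp [hμs]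
  have hSs : S ⊆ Set.univ.pi s := fun x hx ↦ hRs hx.1
  have hS_finite : Measure.pi μ S ≠ ∞ := measure_ne_top_of_subset hSs (by simp [hbox])
  have hS : (Measure.pi μ).real S ≤ 2 * exp (-(ε : ℝ) ^ 2 / Fintype.card ι) :=
    measureReal_pi_le_two_mul_exp_of_subset_univ_pi μ hs hμs hR hRs hRμ hSs ε.cast_nonneg
      fun x hx y hy ↦ Nat.cast_le.2 (hx.2 y hy).le
  have hU0 : 0 ≤ U := by
    obtain ⟨x, -⟩ := nonempty_of_measure_ne_zero (hbox ▸ one_ne_zero)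
    exact (hρ0 x).trans (hU x)
  have hρS : IntegrableOn ρ S (Measure.pi μ) :=
    Measure.integrableOn_of_bounded hS_finite hρ.aestronglyMeasurable
      (ae_of_all _ fun x ↦ (norm_of_nonneg (hρ0 x)).trans_le (hU x))
  calc ∫ x in S, ρ x ∂Measure.pi μ
      ≤ ∫ _ in S, U ∂Measure.pi μ := setIntegral_mono hρS (integrableOn_const hS_finite) hU
    _ = U * (Measure.pi μ).real S := by rw [setIntegral_const, smul_eq_mul, mul_comm]
    _ ≤ U * (2 * exp (-(ε : ℝ) ^ 2 / Fintype.card ι)) := by gcongr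
    _ = 2 * U * exp (-(ε : ℝ) ^ 2 / Fintype.card ι) := by ring

theorem sparse_adversarial_examples (n : ℕ) (ρ : (Fin n → ℝ) → ℝ)
    (hρmeas : Measurable ρ) (hρ0 : ∀ x, 0 ≤ ρ x)
    (hρsupp : ∀ x, ρ x ≠ 0 → x ∈ Set.Icc (0 : Fin n → ℝ) 1)
    (hρint : ∫ x in Set.Icc (0 : Fin n → ℝ) 1, ρ x = 1)
    (U : ℝ) (hU : ∀ x, ρ x ≤ U)
    (R : Set (Fin n → ℝ)) (hR : MeasurableSet R) (hRsub : R ⊆ Set.Icc 0 1)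
    (hRvol : volume R ≤ ENNReal.ofReal (1 / 2)) (ε : ℕ) :
    (∫ x in {x ∈ R | ∀ y ∈ Set.Icc (0 : Fin n → ℝ) 1 \ R, l0Dist x y > ε}, ρ x) ≤
      2 * U * Real.exp (-(ε : ℝ) ^ 2 / n) := by
  have hbound := sparse_adversarial_examples_general (fun _ ↦ volume)
    (fun _ : Fin n ↦ measurableSet_Icc) (by simp) hρmeas hρ0 hU hR
    (hRsub.trans_eq (Set.pi_univ_Icc _ _).symm) hRvol ε
  rwa [Set.pi_univ_Icc, Fintype.card_fin] at hbound
end
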